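/- arXiv:2107.05703 — 5 statements merged into one kernel-verified Lean document; each statement's English description precedes it below -/
import Mathlib

section
/- Let Ω ⊂ ℝ² be a bounded simply connected open set whose boundary is the C² simple closed curve Γ, with interior unit normal n(θ) at the boundary point x(θ). Let v : closure(Ω) → ℝ² be continuous on the closure of Ω and continuously differentiable in Ω, with ∂₁v₂ − ∂₂v₁ = 0 and ∂₁v₁ + ∂₂v₂ = 0 at every point of Ω, and v(x(θ))·n(θ) = 0 for every θ. Then v is identically zero on Ω. -/
open Set

noncomputable section

abbrev E2 := EuclideanSpace ℝ (Fin 2)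

/-- Partial derivative in the `i`-th Cartesian coordinate direction. -/
noncomputable def pd (i : Fin 2) (f : E2 → ℝ) (y : E2) : ℝ :=
  fderiv ℝ f y (EuclideanSpace.single i 1)

/-!
Read as a function on `U ⊆ ℂ`, the complex velocity `f = v₀ - i v₁` is holomorphic by the curl and
divergence equations, so on the simply connected `U` it has a primitive `F`. Near a boundary point,
`U` is one side of a `C¹` graph and `F' = f` stays bounded, so `F` extends continuously to the
closure, and the extension can be differentiated along the boundary curve `z`, with derivative
`(f ∘ z) z'`. Tangency makes this derivative real: the stream function `Im F` is constant on the
boundary. By the maximum principle for `exp (± i F)` it is then constant on `U`, and `f = F' = 0`.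

That `U` lies locally on only one side of its boundary is topology: the set of curve points at which
the exterior of `U` accumulates is open and closed in the curve and nonempty because `U` is bounded,
so at every boundary point one side belongs to `U` and the other to the exterior.
-/

open Filter Metric Topology

section Primitive

variable {X A : Type*} [TopologicalSpace X] [AddCommGroup A]

/-- The principal bundle over `X` whose sections are the functions differing from each of the local
functions `P i`, defined on the neighbourhood `B i` of `i`, by a locally constant one. Its
coordinate changes are translations of the discrete group `A`. -/
def gluingBundle [TopologicalSpace A] [DiscreteTopology A] (B : X → Set X) (P : X → X → A)
    (hBo : ∀ i, IsOpen (B i)) (hB : ∀ i, i ∈ B i)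
    (hP : ∀ i j, ∀ y ∈ B i ∩ B j, ∀ᶠ w in 𝓝 y, P i w - P j w = P i y - P j y) :
    FiberBundleCore X X A where
  baseSet := B
  isOpen_baseSet := hBo
  indexAt := id
  mem_baseSet_at := hB
  coordChange i j y a := P i y - P j y + a
  coordChange_self i y _ a := by simp only [sub_self, zero_add]
  continuousOn_coordChange i j := by
    have hsub : ContinuousOn (fun y => P i y - P j y) (B i ∩ B j) := fun y hy =>
      (continuousAt_const.congr ((hP i j y hy).mono fun _ hw => hw.symm)).continuousWithinAt
    have hadd : Continuous fun q : A × A => q.1 + q.2 := continuous_of_discreteTopology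
    exact hadd.comp_continuousOn
      ((hsub.comp continuousOn_fst fun _ hp => hp.1).prodMk continuousOn_snd)
  coordChange_comp i j k y _ a := by abel

theorem exists_eventually_sub_eq_of_simplyConnectedSpace [SimplyConnectedSpace X]
    [LocallyPathConnectedSpace X] {B : X → Set X} {P : X → X → A}
    (hBo : ∀ i, IsOpen (B i)) (hB : ∀ i, i ∈ B i)
    (hP : ∀ i j, ∀ y ∈ B i ∩ B j, ∀ᶠ w in 𝓝 y, P i w - P j w = P i y - P j y) :
    ∃ F : X → A, ∀ i, ∀ᶠ y in 𝓝 i, F y - P i y = F i - P i i := by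
  let _ : TopologicalSpace A := ⊥
  have : DiscreteTopology A := ⟨rfl⟩
  let Z := gluingBundle B P hBo hB hP
  have hcov : IsCoveringMap (Bundle.TotalSpace.proj : Z.TotalSpace → X) :=
    FiberBundle.isCoveringMap (F := A) (E := Z.Fiber)
  obtain ⟨x₀⟩ : Nonempty X := inferInstance
  obtain ⟨S, ⟨-, hS⟩, -⟩ := hcov.existsUnique_continuousMap_lifts (ContinuousMap.id X) x₀
    (⟨x₀, (0 : A)⟩ : Z.TotalSpace) rfl
  have hproj (y : X) : (S y).proj = y := congrFun hS y
  let fibreCoord : Z.TotalSpace → A := fun t => t.2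
  let value : Z.TotalSpace → A := fun t => P t.proj t.proj + fibreCoord t
  refine ⟨fun y => value (S y), fun i => ?_⟩
  have hcoord (y : X) : (Z.localTriv i (S y)).2 = value (S y) - P i y := by
    change P (S y).proj (S y).proj - P i (S y).proj + fibreCoord (S y) = _
    simp only [value, hproj]
    abel
  have hmem : S i ∈ (Z.localTriv i).source := by
    rw [Z.mem_localTriv_source]
    change (S i).proj ∈ B i
    rw [hproj]
    exact hB i
  have hcont : ContinuousAt (fun y => (Z.localTriv i (S y)).2) i :=
    continuous_snd.continuousAt.comp
      (((Z.localTriv i).continuousAt hmem).comp S.continuous.continuousAt)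
  have hev : ∀ᶠ y in 𝓝 i, (Z.localTriv i (S y)).2 = (Z.localTriv i (S i)).2 :=
    hcont.eventually_mem (mem_nhds_discrete.2 (mem_singleton _))
  simpa only [hcoord] using hev

variable {E : Type*} [NormedAddCommGroup E] [NormedSpace ℂ E]

theorem eventually_sub_eq_of_hasDerivAt {f P Q : ℂ → E} {y : ℂ}
    (hP : ∀ᶠ w in 𝓝 y, HasDerivAt P (f w) w) (hQ : ∀ᶠ w in 𝓝 y, HasDerivAt Q (f w) w) :
    ∀ᶠ w in 𝓝 y, P w - Q w = P y - Q y := by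
  obtain ⟨r, hr, h⟩ := Metric.eventually_nhds_iff_ball.1 (hP.and hQ)
  have hd : ∀ w ∈ ball y r, HasDerivAt (fun w => P w - Q w) 0 w := fun w hw => by
    simpa only [sub_self] using (h w hw).1.fun_sub (h w hw).2
  filter_upwards [ball_mem_nhds y hr] with w hw
  exact isOpen_ball.is_const_of_deriv_eq_zero (convex_ball y r).isPreconnected
    (fun w hw => (hd w hw).differentiableAt.differentiableWithinAt) (fun w hw => (hd w hw).deriv)
    hw (mem_ball_self hr)

theorem isExactOn_of_simplyConnectedSpace [CompleteSpace E] {U : Set ℂ} (hU : IsOpen U)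
    [SimplyConnectedSpace U] {f : ℂ → E} (hf : DifferentiableOn ℂ f U) :
    Complex.IsExactOn f U := by
  have := hU.locallyPathConnectedSpace
  choose r hr hrU using fun i : U => Metric.isOpen_iff.1 hU i i.2
  choose P hP using fun i : U => (hf.mono (hrU i)).isExactOn_ball
  have hball (i : U) {y : ℂ} (hy : y ∈ ball (i : ℂ) (r i)) :
      ∀ᶠ w in 𝓝 y, HasDerivAt (P i) (f w) w :=
    (isOpen_ball.eventually_mem hy).mono (hP i)
  obtain ⟨F, hF⟩ := exists_eventually_sub_eq_of_simplyConnectedSpace (X := U)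
    (B := fun i => Subtype.val ⁻¹' ball (i : ℂ) (r i)) (P := fun i y => P i y)
    (fun i => isOpen_ball.preimage continuous_subtype_val) (fun i => mem_ball_self (hr i))
    (fun i j y hy => continuousAt_subtype_val.eventually
      (eventually_sub_eq_of_hasDerivAt (hball i hy.1) (hball j hy.2)))
  refine ⟨Function.extend Subtype.val F 0, fun z hz => ?_⟩
  have hder : HasDerivAt (fun y => P ⟨z, hz⟩ y + (F ⟨z, hz⟩ - P ⟨z, hz⟩ z)) (f z) z :=
    (hP ⟨z, hz⟩ z (mem_ball_self (hr _))).add_const _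
  refine hder.congr_of_eventuallyEq ?_
  rw [EventuallyEq, ← hU.isOpenEmbedding_subtypeVal.map_nhds_eq ⟨z, hz⟩, eventually_map]
  filter_upwards [hF ⟨z, hz⟩] with y hy
  rw [Subtype.val_injective.extend_apply, ← hy, add_sub_cancel]

end Primitive

section Curve

theorem map_nhds_eq_nhdsWithin_range_of_periodic {X : Type*} [TopologicalSpace X] [T2Space X]
    {z : ℝ → X} {L : ℝ} (hL : 0 < L) (hz : Continuous z) (hper : Function.Periodic z L)
    (hinj : InjOn z (Ico 0 L)) (θ : ℝ) : map z (𝓝 θ) = 𝓝[range z] (z θ) := by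
  have : Fact (0 < L) := ⟨hL⟩
  let φ : AddCircle L → X := hper.lift
  have hφ : Continuous φ := (QuotientAddGroup.isQuotientMap_mk _).continuous_iff.2 hz
  have hφinj : Function.Injective φ := by
    have hrep (t : AddCircle L) : ∃ a ∈ Ico 0 L, (a : AddCircle L) = t := by
      have ht : t ∈ ((↑) '' Ico 0 (0 + L) : Set (AddCircle L)) :=
        AddCircle.coe_image_Ico_eq L 0 ▸ mem_univ t
      rwa [zero_add] at ht
    intro s t hst
    obtain ⟨a, ha, rfl⟩ := hrep s
    obtain ⟨b, hb, rfl⟩ := hrep t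
    exact congrArg _ (hinj ha hb hst)
  calc map z (𝓝 θ) = map φ (map (↑) (𝓝 θ)) := map_map.symm
    _ = map φ (𝓝 (θ : AddCircle L)) := by
      rw [QuotientAddGroup.isOpenQuotientMap_mk.map_nhds_eq]
    _ = 𝓝[range φ] (φ θ) := (hφ.isClosedEmbedding hφinj).isEmbedding.map_nhds_eq _
    _ = 𝓝[range z] (z θ) := by
      rw [← QuotientAddGroup.mk_surjective.range_comp φ]; rfl

end Curve

section Flattening

/-- A regular `C¹` parametrization of an embedded plane curve: an immersion that is open onto its
range. The parameter need not be injective, so that closed curves are parametrized by `ℝ`. -/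
structure IsEmbeddedCurve (z : ℝ → ℂ) : Prop where
  contDiff : ContDiff ℝ 1 z
  deriv_ne_zero : ∀ θ, deriv z θ ≠ 0
  map_nhds : ∀ θ, map z (𝓝 θ) = 𝓝[range z] (z θ)

/-- Coordinates `(θ, s)` near `z θ₀` in which the curve `z` is the line `s = 0`: the point `z θ`
shifted by `s` times the normal at `θ₀`. The normal is taken at `θ₀` rather than at `θ` so that a
`C¹` curve gives a `C¹` map. -/
def normalShift (z : ℝ → ℂ) (θ₀ : ℝ) (p : ℝ × ℝ) : ℂ :=
  z p.1 + p.2 • (Complex.I * deriv z θ₀)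

variable {z : ℝ → ℂ}

theorem normalShift_zero (z : ℝ → ℂ) (θ₀ θ : ℝ) : normalShift z θ₀ (θ, 0) = z θ := by
  simp only [normalShift, zero_smul, add_zero]

theorem contDiff_normalShift (hz : ContDiff ℝ 1 z) (θ₀ : ℝ) :
    ContDiff ℝ 1 (normalShift z θ₀) := by
  unfold normalShift
  fun_prop

theorem fderiv_normalShift_apply (hz : Differentiable ℝ z) (θ₀ : ℝ) (p q : ℝ × ℝ) :
    fderiv ℝ (normalShift z θ₀) p q = q.1 • deriv z p.1 + q.2 • (Complex.I * deriv z θ₀) := by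
  have h : HasFDerivAt (normalShift z θ₀) _ p :=
    ((hz p.1).hasDerivAt.hasFDerivAt.comp p hasFDerivAt_fst).add
      (hasFDerivAt_snd.smul_const (Complex.I * deriv z θ₀))
  rw [h.fderiv]
  simp

theorem IsEmbeddedCurve.exists_hasStrictFDerivAt_normalShift (hz : IsEmbeddedCurve z) (θ₀ : ℝ) :
    ∃ D : (ℝ × ℝ) ≃L[ℝ] ℂ, HasStrictFDerivAt (normalShift z θ₀) (D : (ℝ × ℝ) →L[ℝ] ℂ) (θ₀, 0) := by
  set D := fderiv ℝ (normalShift z θ₀) (θ₀, 0)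
  have hinj : Function.Injective D := by
    refine (injective_iff_map_eq_zero D).2 fun q hq => ?_
    have hq' : ((q.1 : ℂ) + q.2 * Complex.I) * deriv z θ₀ = 0 := by
      rw [← hq, fderiv_normalShift_apply (hz.contDiff.differentiable one_ne_zero)]
      simp only [Complex.real_smul]
      ring
    have hq₀ := (mul_eq_zero.1 hq').resolve_right (hz.deriv_ne_zero θ₀)
    exact Prod.ext (by simpa using congrArg Complex.re hq₀) (by simpa using congrArg Complex.im hq₀)
  have hrank : Module.finrank ℝ (ℝ × ℝ) = Module.finrank ℝ ℂ := by simp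
  exact ⟨(LinearMap.linearEquivOfInjective (D : (ℝ × ℝ) →ₗ[ℝ] ℂ) hinj
      hrank).toContinuousLinearEquiv,
    (contDiff_normalShift hz.contDiff θ₀).contDiffAt.hasStrictFDerivAt one_ne_zero⟩

theorem IsEmbeddedCurve.map_normalShift_nhds (hz : IsEmbeddedCurve z) (θ₀ : ℝ) :
    map (normalShift z θ₀) (𝓝 (θ₀, 0)) = 𝓝 (z θ₀) := by
  obtain ⟨D, hD⟩ := hz.exists_hasStrictFDerivAt_normalShift θ₀
  rw [hD.map_nhds_eq_of_equiv, normalShift_zero]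

theorem IsEmbeddedCurve.eventually_normalShift_mem_range_imp (hz : IsEmbeddedCurve z) (θ₀ : ℝ) :
    ∀ᶠ p in 𝓝 (θ₀, (0 : ℝ)), normalShift z θ₀ p ∈ range z → p.2 = 0 := by
  obtain ⟨D, hD⟩ := hz.exists_hasStrictFDerivAt_normalShift θ₀
  let Φ := hD.toOpenPartialHomeomorph
  have hsource : ∀ᶠ p in 𝓝 (θ₀, (0 : ℝ)), p ∈ Φ.source :=
    Φ.open_source.mem_nhds hD.mem_toOpenPartialHomeomorph_source
  have hcurve : ∀ᶠ w in 𝓝[range z] (z θ₀), ∃ θ, (θ, (0 : ℝ)) ∈ Φ.source ∧ z θ = w := by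
    rw [← hz.map_nhds, eventually_map]
    filter_upwards [(Continuous.prodMk_left (0 : ℝ)).continuousAt.eventually hsource] with θ hθ
    exact ⟨θ, hθ, rfl⟩
  rw [eventually_nhdsWithin_iff, ← hz.map_normalShift_nhds, eventually_map] at hcurve
  filter_upwards [hsource, hcurve] with p hp hpcurve hrange
  obtain ⟨θ, hθ, hθp⟩ := hpcurve hrange
  rw [← Φ.injOn hθ hp ((normalShift_zero z θ₀ θ).trans hθp)]

end Flattening

section Sides

theorem subset_of_isPreconnected_of_disjoint_frontier {X : Type*} [TopologicalSpace X]
    {W t : Set X} (hW : IsOpen W) (ht : IsPreconnected t) (hd : Disjoint t (frontier W))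
    (hne : (t ∩ W).Nonempty) : t ⊆ W := by
  refine ht.subset_left_of_subset_union hW isClosed_closure.isOpen_compl
    (disjoint_compl_right.mono_left subset_closure) (fun y hy => ?_) hne
  rw [hW.frontier_eq] at hd
  by_cases hyW : y ∈ W
  · exact Or.inl hyW
  · exact Or.inr fun hyc => hd.notMem_of_mem_left hy ⟨hyc, hyW⟩

variable {z : ℝ → ℂ} {θ₀ δ : ℝ} {U W : Set ℂ}

theorem IsEmbeddedCurve.mapsTo_normalShift_or (hz : IsEmbeddedCurve z) (hδ : 0 < δ)
    (hbox : ∀ p ∈ ball (θ₀, (0 : ℝ)) δ, normalShift z θ₀ p ∈ range z → p.2 = 0)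
    (hW : IsOpen W) (hdisj : Disjoint W (range z)) (hfront : frontier W ⊆ range z)
    (hθ₀ : z θ₀ ∈ closure W) :
    MapsTo (normalShift z θ₀) (ball θ₀ δ ×ˢ Ioo 0 δ) W ∨
      MapsTo (normalShift z θ₀) (ball θ₀ δ ×ˢ Ioo (-δ) 0) W := by
  have hball : ball (θ₀, (0 : ℝ)) δ = ball θ₀ δ ×ˢ Ioo (-δ) δ := by
    rw [← ball_prod_same, Real.ball_eq_Ioo 0, zero_sub, zero_add]
  have hfreq : ∃ᶠ p in 𝓝 (θ₀, (0 : ℝ)), normalShift z θ₀ p ∈ W := by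
    rwa [mem_closure_iff_frequently, ← hz.map_normalShift_nhds, frequently_map] at hθ₀
  obtain ⟨p, hpW, hp⟩ := (hfreq.and_eventually (hball ▸ ball_mem_nhds _ hδ)).exists
  have hp₀ : p.2 ≠ 0 := fun h => hdisj.notMem_of_mem_left hpW
    ⟨p.1, by rw [← normalShift_zero z θ₀ p.1, ← h]⟩
  have hside {J : Set ℝ} (hJ : IsPreconnected J) (hJδ : J ⊆ Ioo (-δ) δ) (hJ₀ : 0 ∉ J)
      (hpJ : p.2 ∈ J) : MapsTo (normalShift z θ₀) (ball θ₀ δ ×ˢ J) W := by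
    rw [mapsTo_iff_image_subset]
    refine subset_of_isPreconnected_of_disjoint_frontier hW
      (((convex_ball θ₀ δ).isPreconnected.prod hJ).image _
        (contDiff_normalShift hz.contDiff θ₀).continuous.continuousOn)
      (Disjoint.mono_right hfront (disjoint_left.2 ?_)) ?_
    · rintro _ ⟨q, hq, rfl⟩ hrange
      exact hJ₀ (hbox q (hball ▸ prod_mono_right hJδ hq) hrange ▸ hq.2)
    · exact ⟨_, mem_image_of_mem _ ⟨hp.1, hpJ⟩, hpW⟩
  rcases hp₀.lt_or_gt with hneg | hpos
  · exact Or.inr (hside isPreconnected_Ioo (Ioo_subset_Ioo_right hδ.le)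
      right_notMem_Ioo ⟨hp.2.1, hneg⟩)
  · exact Or.inl (hside isPreconnected_Ioo (Ioo_subset_Ioo_left (neg_nonpos.2 hδ.le))
      left_notMem_Ioo ⟨hpos, hp.2.2⟩)

theorem IsEmbeddedCurve.exists_ball_normalShift_mem_range_imp (hz : IsEmbeddedCurve z) (θ₀ : ℝ) :
    ∃ δ > 0, ∀ p ∈ ball (θ₀, (0 : ℝ)) δ, normalShift z θ₀ p ∈ range z → p.2 = 0 :=
  Metric.eventually_nhds_iff_ball.1 (hz.eventually_normalShift_mem_range_imp θ₀)

theorem mem_closure_of_mapsTo_normalShift (hΦ : Continuous (normalShift z θ₀)) {B J : Set ℝ}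
    (hJ : 0 ∈ closure J) (h : MapsTo (normalShift z θ₀) (B ×ˢ J) W) {θ : ℝ} (hθ : θ ∈ B) :
    z θ ∈ closure W := by
  have hmem : (θ, (0 : ℝ)) ∈ closure (B ×ˢ J) := by
    rw [closure_prod_eq]
    exact ⟨subset_closure hθ, hJ⟩
  rw [← normalShift_zero z θ₀]
  exact map_mem_closure hΦ hmem h

theorem zero_mem_closure_Ioo (hδ : 0 < δ) :
    (0 : ℝ) ∈ closure (Ioo 0 δ) ∧ (0 : ℝ) ∈ closure (Ioo (-δ) 0) := by
  rw [closure_Ioo hδ.ne, closure_Ioo (neg_lt_zero.2 hδ).ne]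
  exact ⟨left_mem_Icc.2 hδ.le, right_mem_Icc.2 (neg_nonpos.2 hδ.le)⟩

theorem IsEmbeddedCurve.range_subset_closure (hz : IsEmbeddedCurve z) (hW : IsOpen W)
    (hdisj : Disjoint W (range z)) (hfront : frontier W ⊆ range z)
    (hne : (frontier W).Nonempty) : range z ⊆ closure W := by
  have hclopen : IsClopen (z ⁻¹' closure W) := by
    refine ⟨isClosed_closure.preimage hz.contDiff.continuous,
      isOpen_iff_mem_nhds.2 fun θ₀ hθ₀ => ?_⟩
    obtain ⟨δ, hδ, hbox⟩ := hz.exists_ball_normalShift_mem_range_imp θ₀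
    have hcont := (contDiff_normalShift hz.contDiff θ₀).continuous
    filter_upwards [ball_mem_nhds θ₀ hδ] with θ hθ
    rcases hz.mapsTo_normalShift_or hδ hbox hW hdisj hfront hθ₀ with h | h
    · exact mem_closure_of_mapsTo_normalShift hcont (zero_mem_closure_Ioo hδ).1 h hθ
    · exact mem_closure_of_mapsTo_normalShift hcont (zero_mem_closure_Ioo hδ).2 h hθ
  obtain ⟨w, hw⟩ := hne
  obtain ⟨θ, rfl⟩ := hfront hw
  rw [range_subset_iff]
  exact eq_univ_iff_forall.1 (hclopen.eq_univ ⟨θ, frontier_subset_closure hw⟩)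

/-- A one-sided convex chart of the domain `U` at the boundary point `z θ₀`: `normalShift z θ₀` maps
the convex open set `s` into `U` and covers all of `U` near `z θ₀`, and near `(θ₀, 0)` the axis
`ℝ × {0}`, which parametrizes the curve, consists of limit points of `s`. -/
structure IsCollar (z : ℝ → ℂ) (U : Set ℂ) (θ₀ : ℝ) (s : Set (ℝ × ℝ)) : Prop where
  isOpen : IsOpen s
  convex : Convex ℝ s
  mem_closure : ∀ᶠ θ in 𝓝 θ₀, (θ, (0 : ℝ)) ∈ closure s
  mapsTo : MapsTo (normalShift z θ₀) s U
  nhdsWithin_le : 𝓝[U] (z θ₀) ≤ map (normalShift z θ₀) (𝓝[s] (θ₀, 0))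

theorem IsEmbeddedCurve.isCollar_prod (hz : IsEmbeddedCurve z) (hδ : 0 < δ) {J J' : Set ℝ}
    (hJo : IsOpen J) (hJc : Convex ℝ J) (hJ₀ : 0 ∈ closure J)
    (hcover : ∀ t ∈ ball (0 : ℝ) δ, t ≠ 0 → t ∈ J ∪ J') (hdisj : Disjoint U (range z))
    (hin : MapsTo (normalShift z θ₀) (ball θ₀ δ ×ˢ J) U)
    (hout : MapsTo (normalShift z θ₀) (ball θ₀ δ ×ˢ J') Uᶜ) :
    IsCollar z U θ₀ (ball θ₀ δ ×ˢ J) where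
  isOpen := isOpen_ball.prod hJo
  convex := (convex_ball θ₀ δ).prod hJc
  mem_closure := by
    filter_upwards [ball_mem_nhds θ₀ hδ] with θ hθ
    rw [closure_prod_eq]
    exact ⟨subset_closure hθ, hJ₀⟩
  mapsTo := hin
  nhdsWithin_le A hA := by
    have hA' : ∀ᶠ p in 𝓝 (θ₀, 0), p ∈ ball θ₀ δ ×ˢ J → normalShift z θ₀ p ∈ A :=
      mem_nhdsWithin_iff_eventually.1 hA
    rw [mem_nhdsWithin_iff_eventually, ← hz.map_normalShift_nhds, eventually_map]
    filter_upwards [hA', prod_mem_nhds (ball_mem_nhds θ₀ hδ) (ball_mem_nhds 0 hδ)]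
      with p hpA hp hpU
    have hp₀ : p.2 ≠ 0 := fun h => hdisj.notMem_of_mem_left hpU
      ⟨p.1, by rw [← normalShift_zero z θ₀ p.1, ← h]⟩
    rcases hcover p.2 hp.2 hp₀ with hJ | hJ'
    · exact hpA ⟨hp.1, hJ⟩
    · exact absurd hpU (hout ⟨hp.1, hJ'⟩)

theorem IsEmbeddedCurve.mapsTo_normalShift_exterior_or (hz : IsEmbeddedCurve z) (hδ : 0 < δ)
    (hbox : ∀ p ∈ ball (θ₀, (0 : ℝ)) δ, normalShift z θ₀ p ∈ range z → p.2 = 0)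
    (hUb : Bornology.IsBounded U) (hfront : frontier U = range z) :
    MapsTo (normalShift z θ₀) (ball θ₀ δ ×ˢ Ioo 0 δ) (closure U)ᶜ ∨
      MapsTo (normalShift z θ₀) (ball θ₀ δ ×ˢ Ioo (-δ) 0) (closure U)ᶜ := by
  have hopen : IsOpen (closure U)ᶜ := isClosed_closure.isOpen_compl
  have hdisj : Disjoint (closure U)ᶜ (range z) :=
    hfront ▸ disjoint_compl_left.mono_right frontier_subset_closure
  have hfront' : frontier (closure U)ᶜ ⊆ range z := by
    rw [frontier_compl, ← hfront]
    exact frontier_closure_subset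
  have hne : (frontier (closure U)ᶜ).Nonempty := by
    rw [frontier_compl, nonempty_frontier_iff]
    exact ⟨⟨z θ₀, frontier_subset_closure (hfront ▸ mem_range_self θ₀)⟩,
      fun h => NormedSpace.unbounded_univ ℂ ℂ (h ▸ hUb.closure)⟩
  exact hz.mapsTo_normalShift_or hδ hbox hopen hdisj hfront'
    (hz.range_subset_closure hopen hdisj hfront' hne (mem_range_self θ₀))

theorem IsEmbeddedCurve.exists_isCollar (hz : IsEmbeddedCurve z) (hU : IsOpen U)
    (hUb : Bornology.IsBounded U) (hfront : frontier U = range z) (θ₀ : ℝ) :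
    ∃ s, IsCollar z U θ₀ s := by
  have hdisj : Disjoint U (range z) := hfront ▸ (disjoint_frontier_iff_isOpen.2 hU).symm
  have hsub : (closure U)ᶜ ⊆ Uᶜ := compl_subset_compl.2 subset_closure
  obtain ⟨δ, hδ, hbox⟩ := hz.exists_ball_normalShift_mem_range_imp θ₀
  have hnot_both {J : Set ℝ} (hJ : J.Nonempty) (h : MapsTo (normalShift z θ₀) (ball θ₀ δ ×ˢ J) U) :
      ¬ MapsTo (normalShift z θ₀) (ball θ₀ δ ×ˢ J) (closure U)ᶜ := by
    obtain ⟨t, ht⟩ := hJ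
    have hmem : (θ₀, t) ∈ ball θ₀ δ ×ˢ J := ⟨mem_ball_self hδ, ht⟩
    exact fun h' => hsub (h' hmem) (h hmem)
  have hcover : ∀ t ∈ ball (0 : ℝ) δ, t ≠ 0 → t ∈ Ioo 0 δ ∪ Ioo (-δ) 0 := fun t ht ht₀ => by
    rw [Real.ball_eq_Ioo, zero_sub, zero_add] at ht
    exact ht₀.lt_or_gt.elim (fun h => Or.inr ⟨ht.1, h⟩) fun h => Or.inl ⟨h, ht.2⟩
  rcases hz.mapsTo_normalShift_or hδ hbox hU hdisj hfront.subset
      (frontier_subset_closure (hfront ▸ mem_range_self θ₀)) with hpos | hneg <;>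
    rcases hz.mapsTo_normalShift_exterior_or hδ hbox hUb hfront with hpos' | hneg'
  · exact absurd hpos' (hnot_both (nonempty_Ioo.2 hδ) hpos)
  · exact ⟨_, hz.isCollar_prod hδ isOpen_Ioo (convex_Ioo 0 δ) (zero_mem_closure_Ioo hδ).1 hcover
      hdisj hpos (hneg'.mono_right hsub)⟩
  · exact ⟨_, hz.isCollar_prod hδ isOpen_Ioo (convex_Ioo (-δ) 0) (zero_mem_closure_Ioo hδ).2
      (fun t ht ht₀ => (hcover t ht ht₀).symm) hdisj hneg (hpos'.mono_right hsub)⟩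
  · exact absurd hneg' (hnot_both (nonempty_Ioo.2 (neg_lt_zero.2 hδ)) hneg)

end Sides

section BoundaryRegularity

theorem exists_tendsto_nhdsWithin_of_tendsto_fderiv {E F : Type*} [NormedAddCommGroup E]
    [NormedSpace ℝ E] [NormedAddCommGroup F] [NormedSpace ℝ F] [CompleteSpace F] {f : E → F}
    {s : Set E} {x : E} {f' : E →L[ℝ] F} (hf : DifferentiableOn ℝ f s) (hs : Convex ℝ s)
    (hso : IsOpen s) (hx : x ∈ closure s) (hf' : Tendsto (fderiv ℝ f) (𝓝[s] x) (𝓝 f')) :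
    ∃ y, Tendsto f (𝓝[s] x) (𝓝 y) := by
  have hbound : ∀ᶠ p in 𝓝[s] x, ‖fderiv ℝ f p‖₊ < ‖f'‖₊ + 1 :=
    hf'.nnnorm.eventually_lt_const (lt_add_one _)
  obtain ⟨r, hr, hball⟩ := Metric.mem_nhdsWithin_iff.1 hbound
  have hlip : LipschitzOnWith (‖f'‖₊ + 1) f (ball x r ∩ s) :=
    ((convex_ball x r).inter hs).lipschitzOnWith_of_nnnorm_fderiv_le
      (fun p hp => (hf p hp.2).differentiableAt (hso.mem_nhds hp.2)) fun p hp => (hball hp).le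
  have : NeBot (𝓝[s] x) := mem_closure_iff_nhdsWithin_neBot.1 hx
  have hcauchy : Cauchy (map f (𝓝[s] x)) :=
    (cauchy_nhds.mono nhdsWithin_le_nhds).map_of_le hlip.uniformContinuousOn
      (le_principal_iff.2 (inter_mem (mem_nhdsWithin_of_mem_nhds (ball_mem_nhds x hr))
        self_mem_nhdsWithin))
  exact CompleteSpace.complete hcauchy

variable {z : ℝ → ℂ} {θ₀ : ℝ} {U : Set ℂ} {s : Set (ℝ × ℝ)} {f F : ℂ → ℂ}

theorem IsCollar.hasFDerivAt_comp_normalShift (hs : IsCollar z U θ₀ s) (hz : ContDiff ℝ 1 z)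
    (hF : ∀ y ∈ U, HasDerivAt F (f y) y) {p : ℝ × ℝ} (hp : p ∈ s) :
    HasFDerivAt (F ∘ normalShift z θ₀)
      (f (normalShift z θ₀ p) • fderiv ℝ (normalShift z θ₀) p) p :=
  (hF _ (hs.mapsTo hp)).comp_hasFDerivAt p
    ((contDiff_normalShift hz θ₀).differentiable one_ne_zero p).hasFDerivAt

theorem IsCollar.tendsto_fderiv_comp_normalShift (hs : IsCollar z U θ₀ s) (hz : ContDiff ℝ 1 z)
    (hf : ContinuousWithinAt f U (z θ₀)) (hF : ∀ y ∈ U, HasDerivAt F (f y) y) :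
    Tendsto (fderiv ℝ (F ∘ normalShift z θ₀)) (𝓝[s] (θ₀, 0))
      (𝓝 (f (z θ₀) • fderiv ℝ (normalShift z θ₀) (θ₀, 0))) := by
  have hΦ := contDiff_normalShift hz θ₀
  have hfΦ : Tendsto (f ∘ normalShift z θ₀) (𝓝[s] (θ₀, 0)) (𝓝 (f (z θ₀))) := by
    rw [← normalShift_zero z θ₀ θ₀] at hf ⊢
    exact hf.comp hΦ.continuous.continuousWithinAt hs.mapsTo
  refine (hfΦ.smul ((hΦ.continuous_fderiv one_ne_zero).continuousAt.mono_left
    nhdsWithin_le_nhds)).congr' ?_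
  filter_upwards [self_mem_nhdsWithin] with p hp
  exact (hs.hasFDerivAt_comp_normalShift hz hF hp).fderiv.symm

theorem IsCollar.differentiableOn_comp_normalShift (hs : IsCollar z U θ₀ s) (hz : ContDiff ℝ 1 z)
    (hF : ∀ y ∈ U, HasDerivAt F (f y) y) : DifferentiableOn ℝ (F ∘ normalShift z θ₀) s :=
  fun _ hp => (hs.hasFDerivAt_comp_normalShift hz hF hp).differentiableAt.differentiableWithinAt

theorem IsCollar.exists_tendsto (hs : IsCollar z U θ₀ s) (hz : ContDiff ℝ 1 z)
    (hf : ContinuousWithinAt f U (z θ₀)) (hF : ∀ y ∈ U, HasDerivAt F (f y) y) :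
    ∃ c, Tendsto F (𝓝[U] (z θ₀)) (𝓝 c) := by
  obtain ⟨c, hc⟩ := exists_tendsto_nhdsWithin_of_tendsto_fderiv
    (hs.differentiableOn_comp_normalShift hz hF) hs.convex hs.isOpen hs.mem_closure.self_of_nhds
    (hs.tendsto_fderiv_comp_normalShift hz hf hF)
  exact ⟨c, (tendsto_map'_iff.2 hc).mono_left hs.nhdsWithin_le⟩

theorem IsCollar.hasDerivAt_comp (hs : IsCollar z U θ₀ s) (hz : ContDiff ℝ 1 z)
    (hf : ContinuousWithinAt f U (z θ₀)) (hF : ∀ y ∈ U, HasDerivAt F (f y) y)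
    (hFc : ContinuousOn F (closure U)) :
    HasDerivAt (F ∘ z) (f (z θ₀) * deriv z θ₀) θ₀ := by
  have hΦ := contDiff_normalShift hz θ₀
  have hcont : ContinuousOn (F ∘ normalShift z θ₀) (closure s) :=
    hFc.comp hΦ.continuous.continuousOn (hs.mapsTo.closure hΦ.continuous)
  have hclosure : HasFDerivWithinAt (F ∘ normalShift z θ₀)
      (f (z θ₀) • fderiv ℝ (normalShift z θ₀) (θ₀, 0)) (closure s) (θ₀, 0) :=
    hasFDerivWithinAt_closure_of_tendsto_fderiv (hs.differentiableOn_comp_normalShift hz hF)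
      hs.convex hs.isOpen (fun p hp => (hcont p hp).mono subset_closure)
      (hs.tendsto_fderiv_comp_normalShift hz hf hF)
  have haxis := hclosure.comp_hasDerivAt θ₀ ((hasDerivAt_id θ₀).prodMk (hasDerivAt_const θ₀ 0))
    hs.mem_closure
  have hcurve : (F ∘ normalShift z θ₀) ∘ (fun θ => (θ, (0 : ℝ))) = F ∘ z :=
    funext fun θ => congrArg F (normalShift_zero z θ₀ θ)
  have hspeed : (f (z θ₀) • fderiv ℝ (normalShift z θ₀) (θ₀, 0)) (1, 0)
      = f (z θ₀) * deriv z θ₀ := by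
    rw [smul_apply, fderiv_normalShift_apply (hz.differentiable one_ne_zero),
      one_smul, zero_smul, add_zero, smul_eq_mul]
  exact hspeed ▸ hcurve ▸ haxis

theorem IsEmbeddedCurve.exists_primitive_continuousOn_closure (hz : IsEmbeddedCurve z)
    (hU : IsOpen U) (hUb : Bornology.IsBounded U) (hfront : frontier U = range z)
    (hf : ContinuousOn f (closure U)) (hF : Complex.IsExactOn f U) :
    ∃ G, ContinuousOn G (closure U) ∧ ∀ y ∈ U, HasDerivAt G (f y) y := by
  obtain ⟨F, hF⟩ := hF
  have hlim : ∀ y ∈ closure U, ∃ c, Tendsto F (𝓝[U] y) (𝓝 c) := by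
    intro y hy
    rw [closure_eq_self_union_frontier, hfront] at hy
    rcases hy with hyU | ⟨θ, rfl⟩
    · exact ⟨F y, (hF y hyU).continuousAt.continuousWithinAt⟩
    · obtain ⟨s, hs⟩ := hz.exists_isCollar hU hUb hfront θ
      refine hs.exists_tendsto hz.contDiff ((hf _ ?_).mono subset_closure) hF
      exact frontier_subset_closure (hfront ▸ mem_range_self θ)
  refine ⟨extendFrom U F, continuousOn_extendFrom Subset.rfl hlim, fun y hy => ?_⟩
  refine (hF y hy).congr_of_eventuallyEq ?_
  filter_upwards [hU.mem_nhds hy] with w hw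
  exact extendFrom_extends (fun u hu => (hF u hu).continuousAt.continuousWithinAt) w hw

theorem IsEmbeddedCurve.exists_forall_mem_frontier_im_eq (hz : IsEmbeddedCurve z)
    (hU : IsOpen U) (hUb : Bornology.IsBounded U) (hfront : frontier U = range z)
    (hf : ContinuousOn f (closure U)) (htan : ∀ θ, (f (z θ) * deriv z θ).im = 0)
    (hFc : ContinuousOn F (closure U)) (hF : ∀ y ∈ U, HasDerivAt F (f y) y) :
    ∃ c, ∀ y ∈ frontier U, (F y).im = c := by
  have hderiv (θ : ℝ) : HasDerivAt (fun t => (F (z t)).im) 0 θ := by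
    obtain ⟨s, hs⟩ := hz.exists_isCollar hU hUb hfront θ
    have hfθ := hf _ (frontier_subset_closure (hfront ▸ mem_range_self θ))
    rw [← htan θ]
    exact Complex.imCLM.hasFDerivAt.comp_hasDerivAt θ
      (hs.hasDerivAt_comp hz.contDiff (hfθ.mono subset_closure) hF hFc)
  refine ⟨(F (z 0)).im, ?_⟩
  rw [hfront, forall_mem_range]
  exact fun θ => is_const_of_deriv_eq_zero (fun t => (hderiv t).differentiableAt)
    (fun t => (hderiv t).deriv) θ 0

end BoundaryRegularity

section MaximumPrinciple

variable {E : Type*} [NormedAddCommGroup E] [NormedSpace ℂ E] [Nontrivial E] {U : Set E} {F : E → ℂ}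
  {y : E}

theorem re_le_of_forall_mem_frontier_re_le (hU : Bornology.IsBounded U)
    (hF : DiffContOnCl ℂ F U) {C : ℝ} (hC : ∀ y ∈ frontier U, (F y).re ≤ C) (hy : y ∈ U) :
    (F y).re ≤ C := by
  have hexp : DiffContOnCl ℂ (fun w => Complex.exp (F w)) U :=
    Complex.differentiable_exp.comp_diffContOnCl hF
  have h := Complex.norm_le_of_forall_mem_frontier_norm_le hU hexp (C := Real.exp C)
    (fun w hw => by rw [Complex.norm_exp]; exact Real.exp_le_exp.2 (hC w hw)) (subset_closure hy)
  rwa [Complex.norm_exp, Real.exp_le_exp] at h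

theorem im_eq_of_forall_mem_frontier_im_eq (hU : Bornology.IsBounded U)
    (hF : DiffContOnCl ℂ F U) {c : ℝ} (hc : ∀ y ∈ frontier U, (F y).im = c) (hy : y ∈ U) :
    (F y).im = c := by
  refine le_antisymm ?_ ?_
  · simpa using re_le_of_forall_mem_frontier_re_le hU (hF.const_smul (-Complex.I)) (C := c)
      (fun w hw => by simp [hc w hw]) hy
  · simpa using re_le_of_forall_mem_frontier_re_le hU (hF.const_smul Complex.I) (C := -c)
      (fun w hw => by simp [hc w hw]) hy

theorem eq_zero_of_hasDerivAt_of_im_eventually_const {F : ℂ → ℂ} {F' y : ℂ} {c : ℝ}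
    (hF : HasDerivAt F F' y) (hc : ∀ᶠ w in 𝓝 y, (F w).im = c) : F' = 0 := by
  have him : HasFDerivAt (fun w => (F w).im) (0 : ℂ →L[ℝ] ℝ) y :=
    (hasFDerivAt_const c y).congr_of_eventuallyEq hc
  have heq := him.unique (Complex.imCLM.hasFDerivAt.comp y hF.complexToReal_fderiv)
  exact Complex.ext (by simpa using (DFunLike.congr_fun heq Complex.I).symm)
    (by simpa using (DFunLike.congr_fun heq 1).symm)

end MaximumPrinciple

theorem IsEmbeddedCurve.eq_zero_of_im_mul_deriv_eq_zero {z : ℝ → ℂ} (hz : IsEmbeddedCurve z)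
    {U : Set ℂ} [SimplyConnectedSpace U] (hU : IsOpen U) (hUb : Bornology.IsBounded U)
    (hfront : frontier U = range z) {f : ℂ → ℂ} (hf : DiffContOnCl ℂ f U)
    (htan : ∀ θ, (f (z θ) * deriv z θ).im = 0) {y : ℂ} (hy : y ∈ U) : f y = 0 := by
  obtain ⟨F, hFc, hF⟩ := hz.exists_primitive_continuousOn_closure hU hUb hfront hf.continuousOn
    (isExactOn_of_simplyConnectedSpace hU hf.differentiableOn)
  obtain ⟨c, hc⟩ := hz.exists_forall_mem_frontier_im_eq hU hUb hfront hf.continuousOn htan hFc hF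
  have hFd : DiffContOnCl ℂ F U :=
    ⟨fun w hw => (hF w hw).differentiableAt.differentiableWithinAt, hFc⟩
  refine eq_zero_of_hasDerivAt_of_im_eventually_const (hF y hy) (c := c) ?_
  filter_upwards [hU.mem_nhds hy] with w hw
  exact im_eq_of_forall_mem_frontier_im_eq hUb hFd hc hw

section PlaneVelocity

/-- The identification `(y₀, y₁) ↦ y₀ + i y₁` of the Euclidean plane with `ℂ`. -/
def planeEquiv : E2 ≃ₗᵢ[ℝ] ℂ := Complex.orthonormalBasisOneI.repr.symm

/-- The complex velocity `v₀ - i v₁` of the plane vector field `v`: it is holomorphic when `v` is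
irrotational and incompressible. -/
def complexVelocity (v : E2 → E2) (w : ℂ) : ℂ :=
  starRingEnd ℂ (planeEquiv (v (planeEquiv.symm w)))

variable {v : E2 → E2} {Ω : Set E2} {x : ℝ → E2}

theorem re_planeEquiv (y : E2) : (planeEquiv y).re = y 0 := by
  obtain ⟨w, rfl⟩ := planeEquiv.symm.surjective y
  simp [planeEquiv, Complex.orthonormalBasisOneI_repr_apply]

theorem im_planeEquiv (y : E2) : (planeEquiv y).im = y 1 := by
  obtain ⟨w, rfl⟩ := planeEquiv.symm.surjective y
  simp [planeEquiv, Complex.orthonormalBasisOneI_repr_apply]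

theorem planeEquiv_symm_one : planeEquiv.symm 1 = EuclideanSpace.single 0 1 := by
  rw [LinearIsometryEquiv.symm_apply_eq]
  exact Complex.ext (by simp [re_planeEquiv]) (by simp [im_planeEquiv])

theorem planeEquiv_symm_I : planeEquiv.symm Complex.I = EuclideanSpace.single 1 1 := by
  rw [LinearIsometryEquiv.symm_apply_eq]
  exact Complex.ext (by simp [re_planeEquiv]) (by simp [im_planeEquiv])

theorem complexVelocity_planeEquiv (v : E2 → E2) (y : E2) :
    complexVelocity v (planeEquiv y) = starRingEnd ℂ (planeEquiv (v y)) := by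
  rw [complexVelocity, LinearIsometryEquiv.symm_apply_apply]

theorem pd_apply_eq_fderiv_apply {y : E2} (hv : DifferentiableAt ℝ v y) (i j : Fin 2) :
    pd i (fun u => v u j) y = fderiv ℝ v y (EuclideanSpace.single i 1) j := by
  have h := (EuclideanSpace.proj (𝕜 := ℝ) j).hasFDerivAt.comp y hv.hasFDerivAt
  exact DFunLike.congr_fun h.fderiv _

theorem differentiableAt_complexVelocity {y : E2} (hv : DifferentiableAt ℝ v y)
    (hcurl : pd 0 (fun z => v z 1) y - pd 1 (fun z => v z 0) y = 0)
    (hdiv : pd 0 (fun z => v z 0) y + pd 1 (fun z => v z 1) y = 0) :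
    DifferentiableAt ℂ (complexVelocity v) (planeEquiv y) := by
  have hv' : HasFDerivAt v (fderiv ℝ v y) (planeEquiv.symm (planeEquiv y)) := by
    rw [LinearIsometryEquiv.symm_apply_apply]
    exact hv.hasFDerivAt
  have hreal : HasFDerivAt (complexVelocity v) _ (planeEquiv y) :=
    (Complex.conjCLE.hasFDerivAt.comp _ planeEquiv.toContinuousLinearEquiv.hasFDerivAt).comp _
      (hv'.comp _ planeEquiv.symm.toContinuousLinearEquiv.hasFDerivAt)
  have hfderiv (w : ℂ) : fderiv ℝ (complexVelocity v) (planeEquiv y) w =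
      starRingEnd ℂ (planeEquiv (fderiv ℝ v y (planeEquiv.symm w))) := by
    rw [hreal.fderiv]
    rfl
  simp only [pd_apply_eq_fderiv_apply hv] at hcurl hdiv
  rw [differentiableAt_complex_iff_differentiableAt_real, hfderiv, hfderiv, planeEquiv_symm_one,
    planeEquiv_symm_I, smul_eq_mul]
  refine ⟨hreal.differentiableAt, Complex.ext ?_ ?_⟩
  · rw [Complex.I_mul_re, Complex.conj_re, Complex.conj_im, re_planeEquiv, im_planeEquiv]
    linarith
  · rw [Complex.I_mul_im, Complex.conj_im, Complex.conj_re, re_planeEquiv, im_planeEquiv]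
    linarith

theorem diffContOnCl_complexVelocity (hΩ : IsOpen Ω) (hvc : ContinuousOn v (closure Ω))
    (hv : DifferentiableOn ℝ v Ω)
    (hcurl : ∀ y ∈ Ω, pd 0 (fun z => v z 1) y - pd 1 (fun z => v z 0) y = 0)
    (hdiv : ∀ y ∈ Ω, pd 0 (fun z => v z 0) y + pd 1 (fun z => v z 1) y = 0) :
    DiffContOnCl ℂ (complexVelocity v) (planeEquiv '' Ω) := by
  constructor
  · rintro _ ⟨y, hy, rfl⟩
    exact (differentiableAt_complexVelocity ((hv y hy).differentiableAt (hΩ.mem_nhds hy))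
      (hcurl y hy) (hdiv y hy)).differentiableWithinAt
  · have hclosure : closure (planeEquiv '' Ω) = planeEquiv '' closure Ω :=
      (planeEquiv.toHomeomorph.image_closure Ω).symm
    have hmaps : MapsTo planeEquiv.symm (planeEquiv '' closure Ω) (closure Ω) := by
      rintro _ ⟨y, hy, rfl⟩
      rwa [LinearIsometryEquiv.symm_apply_apply]
    rw [hclosure]
    exact (Complex.continuous_conj.comp planeEquiv.continuous).comp_continuousOn
      (hvc.comp planeEquiv.symm.continuous.continuousOn hmaps)

theorem deriv_planeEquiv_comp (hx : Differentiable ℝ x) (θ : ℝ) :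
    deriv (planeEquiv ∘ x) θ = planeEquiv (deriv x θ) :=
  (planeEquiv.toContinuousLinearEquiv.hasFDerivAt.comp_hasDerivAt θ (hx θ).hasDerivAt).deriv

theorem isEmbeddedCurve_planeEquiv_comp {L : ℝ} (hL : 0 < L) (hx : ContDiff ℝ 1 x)
    (hper : Function.Periodic x L) (hinj : InjOn x (Ico 0 L)) (hreg : ∀ θ, deriv x θ ≠ 0) :
    IsEmbeddedCurve (planeEquiv ∘ x) where
  contDiff := planeEquiv.contDiff.comp hx
  deriv_ne_zero θ := by
    rw [deriv_planeEquiv_comp (hx.differentiable one_ne_zero)]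
    exact (map_ne_zero_iff planeEquiv planeEquiv.injective).2 (hreg θ)
  map_nhds := map_nhds_eq_nhdsWithin_range_of_periodic hL (planeEquiv.continuous.comp hx.continuous)
    (hper.comp planeEquiv) (planeEquiv.injective.comp_injOn hinj)

theorem im_complexVelocity_mul (v : E2 → E2) (y t : E2) :
    (complexVelocity v (planeEquiv y) * planeEquiv t).im = v y 0 * t 1 - v y 1 * t 0 := by
  simp only [complexVelocity_planeEquiv, Complex.mul_im, Complex.conj_re, Complex.conj_im,
    re_planeEquiv, im_planeEquiv]
  ring

end PlaneVelocity

theorem stmt_8_general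
    (L : ℝ) (hL : 0 < L)
    (x : ℝ → E2) (hx : ContDiff ℝ 1 x)
    (hper : ∀ θ, x (θ + L) = x θ)
    (hinj : InjOn x (Ico 0 L))
    (hreg : ∀ θ, deriv x θ ≠ 0)
    (n : ℝ → E2)
    (hn : ∀ θ, n θ 0 = -(deriv x θ 1) ∧ n θ 1 = deriv x θ 0)
    (Ω : Set E2)
    (hΩo : IsOpen Ω) (hΩb : Bornology.IsBounded Ω)
    (hsc : SimplyConnectedSpace ↥Ω)
    (hfront : frontier Ω = Set.range x)
    (v : E2 → E2)
    (hvc : ContinuousOn v (closure Ω))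
    (hv : DifferentiableOn ℝ v Ω)
    (hcurl : ∀ y ∈ Ω, pd 0 (fun z => v z 1) y - pd 1 (fun z => v z 0) y = 0)
    (hdiv : ∀ y ∈ Ω, pd 0 (fun z => v z 0) y + pd 1 (fun z => v z 1) y = 0)
    (htan : ∀ θ, v (x θ) 0 * n θ 0 + v (x θ) 1 * n θ 1 = 0) :
    ∀ y ∈ Ω, v y = 0 := by
  have hcurve : IsEmbeddedCurve (planeEquiv ∘ x) :=
    isEmbeddedCurve_planeEquiv_comp hL hx hper hinj hreg
  have hfront' : frontier (planeEquiv '' Ω) = range (planeEquiv ∘ x) := by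
    rw [range_comp, ← hfront]
    exact (planeEquiv.toHomeomorph.image_frontier Ω).symm
  have hopen : IsOpen (planeEquiv '' Ω) := planeEquiv.toHomeomorph.isOpenMap Ω hΩo
  have : SimplyConnectedSpace (planeEquiv '' Ω) :=
    (planeEquiv.toHomeomorph.isSimplyConnected_image (s := Ω)).2 hsc
  have htan' (θ : ℝ) :
      (complexVelocity v ((planeEquiv ∘ x) θ) * deriv (planeEquiv ∘ x) θ).im = 0 := by
    rw [deriv_planeEquiv_comp (hx.differentiable one_ne_zero), Function.comp_apply,
      im_complexVelocity_mul]
    have h := htan θ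
    rw [(hn θ).1, (hn θ).2] at h
    linarith
  intro y hy
  have hzero := hcurve.eq_zero_of_im_mul_deriv_eq_zero
    hopen (planeEquiv.lipschitz.isBounded_image hΩb) hfront'
    (diffContOnCl_complexVelocity hΩo hvc hv hcurl hdiv) htan' (mem_image_of_mem planeEquiv hy)
  rwa [complexVelocity_planeEquiv, map_eq_zero_iff _ star_injective,
    map_eq_zero_iff _ planeEquiv.injective] at hzero

theorem stmt_8
    (L : ℝ) (hL : 0 < L)
    (x : ℝ → E2) (hx : ContDiff ℝ 2 x)
    (hper : ∀ θ, x (θ + L) = x θ)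
    (hinj : InjOn x (Ico 0 L))
    (hunit : ∀ θ, deriv x θ 0 ^ 2 + deriv x θ 1 ^ 2 = 1)
    (n : ℝ → E2)
    (hn : ∀ θ, n θ 0 = -(deriv x θ 1) ∧ n θ 1 = deriv x θ 0)
    (Ω : Set E2)
    (hΩo : IsOpen Ω) (hΩb : Bornology.IsBounded Ω)
    (hsc : SimplyConnectedSpace ↥Ω)
    (hfront : frontier Ω = Set.range x)
    (hintn : ∀ θ, ∃ ε > 0, ∀ s : ℝ, 0 < s → s < ε → x θ + s • n θ ∈ Ω)
    (v : E2 → E2)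
    (hvc : ContinuousOn v (closure Ω))
    (hv1 : ContDiffOn ℝ 1 v Ω)
    (hcurl : ∀ y ∈ Ω, pd 0 (fun z => v z 1) y - pd 1 (fun z => v z 0) y = 0)
    (hdiv : ∀ y ∈ Ω, pd 0 (fun z => v z 0) y + pd 1 (fun z => v z 1) y = 0)
    (htan : ∀ θ, v (x θ) 0 * n θ 0 + v (x θ) 1 * n θ 1 = 0) :
    ∀ y ∈ Ω, v y = 0 := by
  have hreg (θ : ℝ) : deriv x θ ≠ 0 := fun h => by simpa [h] using hunit θ
  exact stmt_8_general L hL x (hx.of_le one_le_two) hper hinj hreg n hn Ω hΩo hΩb hsc hfront v hvc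
    (hv1.differentiableOn one_ne_zero) hcurl hdiv htan
end
end

section
/- Let x : ℝ → ℝ² be a C², L-periodic, unit-speed curve, injective on [0,L), with image Γ, normal n(θ) = (−x₂'(θ), x₁'(θ)), and define X(s,θ) = x(θ) + s·n(θ). Then there exists δ > 0 such that: X restricted to (−δ,δ) × [0,L) is injective; the image of X restricted to (−δ,δ) × ℝ equals the open neighborhood V_δ = { y ∈ ℝ² : dist(y,Γ) < δ }; for every (s,θ) with |s| < δ one has dist(X(s,θ), Γ) = |s|; and for every y ∈ V_δ there is a unique point of Γ at distance dist(y,Γ) from y. -/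
open Set

noncomputable section

/-!
The tangential part of a chord `x φ - x θ` has first order in `φ - θ`, while by Taylor its normal
part has second order. Simplicity of the closed curve and compactness bound the parameter distance,
taken around the circle, by the chord length. Hence the normal part of every chord is at most
`C * chord ^ 2`, and a ball of radius below `1 / (2 * C)` tangent to the curve touches it only at
the point of contact: `x θ` is the only point of the curve nearest to `x θ + v` for short normal
vectors `v`. Conversely `y - z` is normal to the curve at any nearest point `z` to `y`.
-/

open scoped NNReal RealInnerProductSpace

section NormedSpace

variable {E : Type*} [NormedAddCommGroup E] [NormedSpace ℝ E] {f : ℝ → E} {K : ℝ≥0} {L : ℝ}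

lemma norm_sub_sub_smul_deriv_le (hf : Differentiable ℝ f) (hK : LipschitzWith K (deriv f))
    (a b : ℝ) : ‖f b - f a - (b - a) • deriv f a‖ ≤ K * |b - a| ^ 2 := by
  have hderiv (t : ℝ) :
      HasDerivAt (fun t => f t - (t - a) • deriv f a) (deriv f t - deriv f a) t := by
    simpa using (hf t).hasDerivAt.fun_sub (((hasDerivAt_id t).sub_const a).smul_const (deriv f a))
  have hbound : ∀ t ∈ uIcc a b, ‖deriv f t - deriv f a‖ ≤ K * |b - a| := fun t ht =>
    (hK.norm_sub_le t a).trans (by gcongr; exact abs_sub_left_of_mem_uIcc ht)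
  have hmean := (convex_uIcc a b).norm_image_sub_le_of_norm_hasDerivWithin_le
    (fun t _ => (hderiv t).hasDerivWithinAt) hbound left_mem_uIcc right_mem_uIcc
  calc ‖f b - f a - (b - a) • deriv f a‖
      = ‖f b - (b - a) • deriv f a - (f a - (a - a) • deriv f a)‖ := by
        congr 1; rw [sub_self, zero_smul]; abel
    _ ≤ K * |b - a| * |b - a| := hmean
    _ = K * |b - a| ^ 2 := by ring

lemma half_mul_abs_sub_le_norm_sub (hf : Differentiable ℝ f) (hK : LipschitzWith K (deriv f))
    {a b c : ℝ} (hc : c ≤ ‖deriv f a‖) (hab : K * |b - a| ≤ c / 2) :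
    c / 2 * |b - a| ≤ ‖f b - f a‖ := by
  have htaylor := norm_sub_sub_smul_deriv_le hf hK a b
  have htangent : c * |b - a| ≤ ‖(b - a) • deriv f a‖ := by
    rw [norm_smul, Real.norm_eq_abs, mul_comm]
    gcongr
  have htriangle := norm_sub_norm_le ((b - a) • deriv f a) (f b - f a)
  rw [norm_sub_rev _ (f b - f a)] at htriangle
  have herror : K * |b - a| ^ 2 ≤ c / 2 * |b - a| := by
    rw [sq, ← mul_assoc]
    gcongr
  linarith

lemma periodic_deriv (hf : f.Periodic L) : (deriv f).Periodic L := fun t => by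
  rw [← deriv_comp_add_const, funext hf]

lemma exists_lipschitzWith_of_periodic (hf : ContDiff ℝ 1 f) (hper : f.Periodic L) (hL : L ≠ 0) :
    ∃ K, LipschitzWith K f := by
  obtain ⟨M, hM, hbound⟩ := ((periodic_deriv hper).isBounded_of_continuous hL
    (hf.continuous_deriv le_rfl)).exists_pos_norm_le
  exact ⟨⟨M, hM.le⟩, lipschitzWith_of_nnnorm_deriv_le (hf.differentiable one_ne_zero)
    fun t => hbound _ (mem_range_self t)⟩

end NormedSpace

section Compactness

lemma exists_pos_le_norm_of_periodic {E : Type*} [NormedAddCommGroup E] {f : ℝ → E} {L : ℝ}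
    (hf : Continuous f) (hper : f.Periodic L) (hL : L ≠ 0) (hne : ∀ t, f t ≠ 0) :
    ∃ c > 0, ∀ t, c ≤ ‖f t‖ := by
  obtain ⟨c, hc, hle⟩ := (hper.compact_of_continuous hL hf).exists_forall_le'
    continuous_norm.continuousOn (a := 0) (forall_mem_range.2 fun t => norm_pos_iff.2 (hne t))
  exact ⟨c, hc, fun t => hle _ (mem_range_self t)⟩

lemma exists_pos_forall_le_dist {X Y : Type*} [PseudoMetricSpace X] [CompactSpace X]
    [MetricSpace Y] {f : X → Y} (hf : Continuous f) (hinj : f.Injective) {r : ℝ} (hr : 0 < r) :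
    ∃ m > 0, ∀ a b, r ≤ dist a b → m ≤ dist (f a) (f b) := by
  have hcompact : IsCompact {p : X × X | r ≤ dist p.1 p.2} :=
    (isClosed_le continuous_const continuous_dist).isCompact
  have hpos : ∀ p ∈ {p : X × X | r ≤ dist p.1 p.2}, 0 < dist (f p.1) (f p.2) :=
    fun p hp => dist_pos.2 <| hinj.ne fun h => by
      rw [mem_ofPred_eq, h, dist_self] at hp
      exact hp.not_gt hr
  obtain ⟨m, hm, hle⟩ := hcompact.exists_forall_le' (by fun_prop) hpos
  exact ⟨m, hm, fun a b hab => hle (a, b) hab⟩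

lemma injective_lift_of_injOn_Ico {Y : Type*} {f : ℝ → Y} {L : ℝ} (hL : 0 < L)
    (hper : f.Periodic L) (hinj : InjOn f (Ico 0 L)) : hper.lift.Injective := by
  have : Fact (0 < L) := ⟨hL⟩
  intro a b hab
  obtain ⟨⟨s, hs⟩, rfl⟩ := (AddCircle.equivIco L 0).symm.surjective a
  obtain ⟨⟨t, ht⟩, rfl⟩ := (AddCircle.equivIco L 0).symm.surjective b
  rw [zero_add] at hs ht
  exact congrArg _ (Subtype.ext (hinj hs ht hab))

lemma exists_eq_and_abs_sub_eq_norm_coe {Y : Type*} {f : ℝ → Y} {L : ℝ} (hper : f.Periodic L)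
    (s t : ℝ) : ∃ t', f t' = f t ∧ |t' - s| = ‖((t - s : ℝ) : AddCircle L)‖ :=
  ⟨t - round (L⁻¹ * (t - s)) * L, hper.sub_int_mul_eq _, by
    rw [AddCircle.norm_eq, sub_right_comm]⟩

end Compactness

section ChordArc

variable {E : Type*} [NormedAddCommGroup E] [NormedSpace ℝ E] {x : ℝ → E} {K : ℝ≥0} {L : ℝ}

lemma exists_norm_coe_sub_le_mul_norm_sub (hL : 0 < L) (hK : LipschitzWith K (deriv x))
    (hreg : ∀ θ, deriv x θ ≠ 0) (hper : x.Periodic L) (hinj : InjOn x (Ico 0 L)) :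
    ∃ A > 0, ∀ θ φ, ‖((φ - θ : ℝ) : AddCircle L)‖ ≤ A * ‖x φ - x θ‖ := by
  have : Fact (0 < L) := ⟨hL⟩
  have hx : Differentiable ℝ x := fun θ => differentiableAt_of_deriv_ne_zero (hreg θ)
  obtain ⟨c, hc, hspeed⟩ :=
    exists_pos_le_norm_of_periodic hK.continuous (periodic_deriv hper) hL.ne' hreg
  set r := c / (2 * (K + 1)) with hr
  have hlift : Continuous hper.lift := continuous_coinduced_dom.2 hx.continuous
  obtain ⟨m, hm, hfar⟩ := exists_pos_forall_le_dist (X := AddCircle L) hlift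
    (injective_lift_of_injOn_Ico hL hper hinj) (show 0 < r by positivity)
  refine ⟨2 / c + L / (2 * m), by positivity, fun θ φ => ?_⟩
  rw [add_mul]
  rcases le_total r ‖((φ - θ : ℝ) : AddCircle L)‖ with hle | hle
  · have hchord : m ≤ ‖x φ - x θ‖ := by
      simpa [dist_eq_norm] using hfar φ θ (by simpa [dist_eq_norm] using hle)
    calc ‖((φ - θ : ℝ) : AddCircle L)‖
        ≤ L / 2 := by simpa [abs_of_pos hL] using AddCircle.norm_le_half_period L hL.ne'
      _ = L / (2 * m) * m := by field_simp
      _ ≤ L / (2 * m) * ‖x φ - x θ‖ := by gcongr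
      _ ≤ _ := le_add_of_nonneg_left (by positivity)
  · obtain ⟨φ', hφ', habs⟩ := exists_eq_and_abs_sub_eq_norm_coe hper θ φ
    rw [← habs] at hle
    have hsmall : K * |φ' - θ| ≤ c / 2 := calc
      K * |φ' - θ| ≤ (K + 1) * r := by gcongr; simp
      _ = c / 2 := by rw [hr]; field_simp
    have hnear := half_mul_abs_sub_le_norm_sub hx hK (hspeed θ) hsmall
    rw [hφ', habs] at hnear
    calc ‖((φ - θ : ℝ) : AddCircle L)‖
        = 2 / c * (c / 2 * ‖((φ - θ : ℝ) : AddCircle L)‖) := by field_simp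
      _ ≤ 2 / c * ‖x φ - x θ‖ := by gcongr
      _ ≤ _ := le_add_of_nonneg_right (by positivity)

end ChordArc

section InnerProductSpace

variable {E : Type*} [NormedAddCommGroup E] [InnerProductSpace ℝ E]

lemma norm_lt_dist_add_iff {p q v : E} :
    ‖v‖ < dist (p + v) q ↔ 2 * ⟪q - p, v⟫ < ‖q - p‖ ^ 2 := by
  have hchord : p + v - q = v - (q - p) := by abel
  rw [dist_eq_norm, hchord, ← sq_lt_sq₀ (norm_nonneg _) (norm_nonneg _), norm_sub_sq_real,
    real_inner_comm]
  constructor <;> intro h <;> linarith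

lemma inner_deriv_sub_eq_zero_of_isLocalMin_dist {x : ℝ → E} {y : E} {θ : ℝ}
    (hx : DifferentiableAt ℝ x θ) (hmin : IsLocalMin (fun φ => dist y (x φ)) θ) :
    ⟪deriv x θ, y - x θ⟫ = 0 := by
  have hmin_sq : IsLocalMin (fun φ => ‖y - x φ‖ ^ 2) θ := hmin.mono fun φ hφ => by
    simp only [dist_eq_norm] at hφ
    exact pow_le_pow_left₀ (norm_nonneg _) hφ 2
  have hzero := hmin_sq.hasDerivAt_eq_zero (hx.hasDerivAt.const_sub y).norm_sq
  rw [inner_neg_right, real_inner_comm] at hzero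
  linarith

lemma exists_eq_add_inner_deriv_eq_zero {x : ℝ → E} (hx : Differentiable ℝ x)
    (hcompact : IsCompact (range x)) (y : E) :
    ∃ θ v, ⟪deriv x θ, v⟫ = 0 ∧ ‖v‖ = Metric.infDist y (range x) ∧ x θ + v = y := by
  obtain ⟨_, ⟨θ, rfl⟩, hθ⟩ := hcompact.exists_infDist_eq_dist (range_nonempty x) y
  have hmin : IsLocalMin (fun φ => dist y (x φ)) θ := .of_forall fun φ =>
    hθ.symm.trans_le (Metric.infDist_le_dist_of_mem (mem_range_self φ))
  exact ⟨θ, y - x θ, inner_deriv_sub_eq_zero_of_isLocalMin_dist (hx θ) hmin,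
    by rw [hθ, dist_eq_norm], add_sub_cancel _ _⟩

lemma exists_abs_inner_chord_le {x : ℝ → E} {K : ℝ≥0} {L : ℝ} (hL : 0 < L)
    (hK : LipschitzWith K (deriv x)) (hreg : ∀ θ, deriv x θ ≠ 0) (hper : x.Periodic L)
    (hinj : InjOn x (Ico 0 L)) :
    ∃ C > 0, ∀ θ φ v, ⟪deriv x θ, v⟫ = 0 → |⟪x φ - x θ, v⟫| ≤ C * ‖x φ - x θ‖ ^ 2 * ‖v‖ := by
  have hx : Differentiable ℝ x := fun θ => differentiableAt_of_deriv_ne_zero (hreg θ)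
  obtain ⟨A, hA, hchord⟩ := exists_norm_coe_sub_le_mul_norm_sub hL hK hreg hper hinj
  refine ⟨(K + 1) * A ^ 2, by positivity, fun θ φ v hv => ?_⟩
  obtain ⟨φ', hφ', habs⟩ := exists_eq_and_abs_sub_eq_norm_coe hper θ φ
  have hnormal : ⟪x φ - x θ, v⟫ = ⟪x φ' - x θ - (φ' - θ) • deriv x θ, v⟫ := by
    rw [inner_sub_left (x φ' - x θ), real_inner_smul_left, hv, mul_zero, sub_zero, hφ']
  calc |⟪x φ - x θ, v⟫|
      ≤ ‖x φ' - x θ - (φ' - θ) • deriv x θ‖ * ‖v‖ := hnormal ▸ abs_real_inner_le_norm _ _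
    _ ≤ K * |φ' - θ| ^ 2 * ‖v‖ := by gcongr; exact norm_sub_sub_smul_deriv_le hx hK θ φ'
    _ ≤ (K + 1) * (A * ‖x φ - x θ‖) ^ 2 * ‖v‖ := by
        gcongr
        · simp
        · exact habs.trans_le (hchord θ φ)
    _ = (K + 1) * A ^ 2 * ‖x φ - x θ‖ ^ 2 * ‖v‖ := by ring

/-- `δ` is a tubular radius of the curve `x` if every closed ball of radius less than `δ` that is
tangent to `x` at a point meets the curve only at that point. The center of the ball is `x θ + v`
with `v` normal at `θ`; points are compared rather than parameters, so that closed curves may be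
parametrized periodically. -/
def IsTubularRadius (x : ℝ → E) (δ : ℝ) : Prop :=
  ∀ ⦃θ φ : ℝ⦄ ⦃v : E⦄, ⟪deriv x θ, v⟫ = 0 → ‖v‖ < δ → x φ ≠ x θ → ‖v‖ < dist (x θ + v) (x φ)

namespace IsTubularRadius

variable {x : ℝ → E} {δ θ φ : ℝ} {v w : E}

lemma infDist_add (h : IsTubularRadius x δ) (hv : ⟪deriv x θ, v⟫ = 0) (hδ : ‖v‖ < δ) :
    Metric.infDist (x θ + v) (range x) = ‖v‖ := by
  refine le_antisymm ?_ ((Metric.le_infDist (range_nonempty x)).2 (forall_mem_range.2 fun φ => ?_))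
  · simpa using Metric.infDist_le_dist_of_mem (x := x θ + v) (mem_range_self (f := x) θ)
  · by_cases hφ : x φ = x θ
    · simp [hφ]
    · exact (h hv hδ hφ).le

lemma existsUnique_dist_eq_infDist (h : IsTubularRadius x δ) (hv : ⟪deriv x θ, v⟫ = 0)
    (hδ : ‖v‖ < δ) :
    ∃! z, z ∈ range x ∧ dist (x θ + v) z = Metric.infDist (x θ + v) (range x) := by
  rw [h.infDist_add hv hδ]
  refine ⟨x θ, ⟨mem_range_self θ, by simp⟩, ?_⟩
  rintro _ ⟨⟨φ, rfl⟩, hφ⟩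
  by_contra hne
  exact (h hv hδ hne).ne' hφ

lemma eq_and_eq_of_add_eq_add (h : IsTubularRadius x δ) (hv : ⟪deriv x θ, v⟫ = 0) (hvδ : ‖v‖ < δ)
    (hw : ⟪deriv x φ, w⟫ = 0) (hwδ : ‖w‖ < δ) (heq : x θ + v = x φ + w) : x θ = x φ ∧ v = w := by
  have hpoint : x θ = x φ := (h.existsUnique_dist_eq_infDist hv hvδ).unique
    ⟨mem_range_self θ, by rw [h.infDist_add hv hvδ]; simp⟩
    ⟨mem_range_self φ, by rw [heq, h.infDist_add hw hwδ]; simp⟩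
  exact ⟨hpoint, add_left_cancel (hpoint ▸ heq)⟩

end IsTubularRadius

lemma exists_isTubularRadius {x : ℝ → E} {K : ℝ≥0} {L : ℝ} (hL : 0 < L)
    (hK : LipschitzWith K (deriv x)) (hreg : ∀ θ, deriv x θ ≠ 0) (hper : x.Periodic L)
    (hinj : InjOn x (Ico 0 L)) : ∃ δ > 0, IsTubularRadius x δ := by
  obtain ⟨C, hC, hchord⟩ := exists_abs_inner_chord_le hL hK hreg hper hinj
  refine ⟨1 / (2 * C), by positivity, fun θ φ v hv hδ hne => norm_lt_dist_add_iff.2 ?_⟩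
  have hsmall : 2 * C * ‖v‖ < 1 := by rwa [lt_div_iff₀' (by positivity)] at hδ
  have hpos : 0 < ‖x φ - x θ‖ ^ 2 := by
    have := norm_pos_iff.2 (sub_ne_zero.2 hne)
    positivity
  calc 2 * ⟪x φ - x θ, v⟫
      ≤ 2 * (C * ‖x φ - x θ‖ ^ 2 * ‖v‖) := by gcongr; exact le_of_abs_le (hchord θ φ v hv)
    _ = 2 * C * ‖v‖ * ‖x φ - x θ‖ ^ 2 := by ring
    _ < ‖x φ - x θ‖ ^ 2 := mul_lt_of_lt_one_left hpos hsmall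

/-- The isometry `ν θ` parametrizes the normal space of `x` at `θ`, of any codimension, by a model
space `F`; a planar curve with a unit normal has `F = ℝ`. -/
theorem stmt_12_general {F : Type*} [NormedAddCommGroup F] [NormedSpace ℝ F] {x : ℝ → E} {K : ℝ≥0}
    {L : ℝ} (hL : 0 < L) (hK : LipschitzWith K (deriv x)) (hreg : ∀ θ, deriv x θ ≠ 0)
    (hper : x.Periodic L) (hinj : InjOn x (Ico 0 L)) (ν : ℝ → F →ₗᵢ[ℝ] E)
    (hν : ∀ θ, (ν θ).toLinearMap.range = (ℝ ∙ deriv x θ)ᗮ) :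
    ∃ δ : ℝ, 0 < δ ∧
      InjOn (fun p : F × ℝ => x p.2 + ν p.2 p.1) (Metric.ball 0 δ ×ˢ Ico 0 L) ∧
      (fun p : F × ℝ => x p.2 + ν p.2 p.1) '' (Metric.ball 0 δ ×ˢ (univ : Set ℝ)) =
        {y : E | Metric.infDist y (range x) < δ} ∧
      (∀ (s : F) (θ : ℝ), ‖s‖ < δ → Metric.infDist (x θ + ν θ s) (range x) = ‖s‖) ∧
      (∀ y : E, Metric.infDist y (range x) < δ →
        ∃! z : E, z ∈ range x ∧ dist y z = Metric.infDist y (range x)) := by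
  have hx : Differentiable ℝ x := fun θ => differentiableAt_of_deriv_ne_zero (hreg θ)
  have mem_range_frame (θ : ℝ) (v : E) : (∃ s, ν θ s = v) ↔ ⟪deriv x θ, v⟫ = 0 := by
    rw [← Submodule.mem_orthogonal_singleton_iff_inner_right, ← hν]; rfl
  have hnormal (θ : ℝ) (s : F) : ⟪deriv x θ, ν θ s⟫ = 0 := (mem_range_frame θ _).1 ⟨s, rfl⟩
  obtain ⟨δ, hδ, htube⟩ := exists_isTubularRadius hL hK hreg hper hinj
  have hfoot (y : E) (hy : Metric.infDist y (range x) < δ) :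
      ∃ s θ, ‖s‖ < δ ∧ x θ + ν θ s = y := by
    obtain ⟨θ, v, hv, hnorm, rfl⟩ :=
      exists_eq_add_inner_deriv_eq_zero hx (hper.compact_of_continuous hL.ne' hx.continuous) y
    obtain ⟨s, rfl⟩ := (mem_range_frame θ v).2 hv
    exact ⟨s, θ, by rwa [← hnorm, (ν θ).norm_map] at hy, rfl⟩
  have hdist (s : F) (θ : ℝ) (hs : ‖s‖ < δ) : Metric.infDist (x θ + ν θ s) (range x) = ‖s‖ := by
    rw [htube.infDist_add (hnormal θ s) (by simpa using hs), (ν θ).norm_map]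
  refine ⟨δ, hδ, ?_, ?_, hdist, fun y hy => ?_⟩
  · rintro ⟨s, θ⟩ ⟨hs, hθ⟩ ⟨t, φ⟩ ⟨ht, hφ⟩ heq
    obtain ⟨hpoint, hvector⟩ := htube.eq_and_eq_of_add_eq_add (hnormal θ s) (by simpa using hs)
      (hnormal φ t) (by simpa using ht) heq
    obtain rfl := hinj hθ hφ hpoint
    rw [(ν θ).injective hvector]
  · ext y
    constructor
    · rintro ⟨⟨s, θ⟩, ⟨hs, -⟩, rfl⟩
      rw [mem_ball_zero_iff] at hs
      exact (hdist s θ hs).trans_lt hs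
    · intro hy
      obtain ⟨s, θ, hs, rfl⟩ := hfoot y hy
      exact ⟨(s, θ), ⟨mem_ball_zero_iff.2 hs, mem_univ θ⟩, rfl⟩
  · obtain ⟨s, θ, hs, rfl⟩ := hfoot y hy
    exact htube.existsUnique_dist_eq_infDist (hnormal θ s) (by simpa using hs)

end InnerProductSpace

section Plane

/-- The rotation of the plane by a quarter turn counterclockwise, in coordinates; it takes the
velocity of a planar curve to its normal. -/
def quarterTurn (u : E2) : E2 := !₂[-u 1, u 0]

@[simp] lemma quarterTurn_apply_zero (u : E2) : quarterTurn u 0 = -u 1 := rfl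

@[simp] lemma quarterTurn_apply_one (u : E2) : quarterTurn u 1 = u 0 := rfl

lemma norm_quarterTurn (u : E2) : ‖quarterTurn u‖ = ‖u‖ := by
  simp [EuclideanSpace.norm_eq, add_comm]

lemma real_inner_eq_add_mul (u v : E2) : ⟪u, v⟫ = u 0 * v 0 + u 1 * v 1 := by
  simp [PiLp.inner_apply, Fin.sum_univ_two, mul_comm]

lemma span_quarterTurn {u : E2} (hu : u ≠ 0) : (ℝ ∙ quarterTurn u) = (ℝ ∙ u)ᗮ := by
  have hsq : u 0 ^ 2 + u 1 ^ 2 ≠ 0 := by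
    simpa [EuclideanSpace.real_norm_sq_eq] using pow_ne_zero 2 (norm_ne_zero_iff.2 hu)
  ext v
  rw [Submodule.mem_span_singleton, Submodule.mem_orthogonal_singleton_iff_inner_right,
    real_inner_eq_add_mul]
  constructor
  · rintro ⟨s, rfl⟩
    simp only [PiLp.smul_apply, smul_eq_mul, quarterTurn_apply_zero, quarterTurn_apply_one]
    ring
  · intro hv
    refine ⟨(u 0 * v 1 - u 1 * v 0) / (u 0 ^ 2 + u 1 ^ 2), PiLp.ext (Fin.forall_fin_two.2 ⟨?_, ?_⟩)⟩
    · rw [PiLp.smul_apply, smul_eq_mul, quarterTurn_apply_zero, div_mul_eq_mul_div, div_eq_iff hsq]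
      linear_combination -u 0 * hv
    · rw [PiLp.smul_apply, smul_eq_mul, quarterTurn_apply_one, div_mul_eq_mul_div, div_eq_iff hsq]
      linear_combination -u 1 * hv

end Plane

theorem stmt_12
    (L : ℝ) (hL : 0 < L)
    (x : ℝ → E2) (hx : ContDiff ℝ 2 x)
    (hper : ∀ θ, x (θ + L) = x θ)
    (hinj : InjOn x (Ico 0 L))
    (hunit : ∀ θ, deriv x θ 0 ^ 2 + deriv x θ 1 ^ 2 = 1)
    (n : ℝ → E2)
    (hn : ∀ θ, n θ 0 = -(deriv x θ 1) ∧ n θ 1 = deriv x θ 0)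
    (X : ℝ → ℝ → E2) (hX : ∀ s θ, X s θ = x θ + s • n θ) :
    ∃ δ : ℝ, 0 < δ ∧
      -- X restricted to (−δ,δ) × [0,L) is injective
      InjOn (fun p : ℝ × ℝ => X p.1 p.2) (Ioo (-δ) δ ×ˢ Ico 0 L) ∧
      -- the image of X restricted to (−δ,δ) × ℝ is the δ-neighborhood of Γ
      (fun p : ℝ × ℝ => X p.1 p.2) '' (Ioo (-δ) δ ×ˢ (univ : Set ℝ)) =
        {y : E2 | Metric.infDist y (Set.range x) < δ} ∧
      -- dist(X(s,θ), Γ) = |s|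
      (∀ s θ : ℝ, |s| < δ → Metric.infDist (X s θ) (Set.range x) = |s|) ∧
      -- unique nearest point on Γ
      (∀ y : E2, Metric.infDist y (Set.range x) < δ →
        ∃! z : E2, z ∈ Set.range x ∧ dist y z = Metric.infDist y (Set.range x)) := by
  have hspeed (θ : ℝ) : ‖deriv x θ‖ = 1 := by simp [EuclideanSpace.norm_eq, hunit θ]
  have hreg (θ : ℝ) : deriv x θ ≠ 0 := norm_ne_zero_iff.1 (by simp [hspeed θ])
  obtain rfl : n = fun θ => quarterTurn (deriv x θ) :=
    funext fun θ => PiLp.ext (Fin.forall_fin_two.2 (hn θ))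
  obtain rfl : X = fun s θ => x θ + s • quarterTurn (deriv x θ) := funext₂ hX
  obtain ⟨K, hK⟩ :=
    exists_lipschitzWith_of_periodic (hx.deriv' (n := 1)) (periodic_deriv hper) hL.ne'
  simpa [Real.ball_eq_Ioo] using stmt_12_general hL hK hreg hper hinj
    (fun θ => .toSpanSingleton ℝ E2 ((norm_quarterTurn _).trans (hspeed θ)))
    (fun θ => (LinearMap.range_toSpanSingleton _).trans (span_quarterTurn (hreg θ)))
end
end

section
/- Let x : ℝ → ℝ² be a C², L-periodic, unit-speed curve, injective on [0,L), with image Γ and normal n(θ) = (−x₂'(θ), x₁'(θ)), X(s,θ) = x(θ) + s·n(θ), and let δ > 0 be small enough that X is injective on (−δ,δ)×[0,L) with image { y : dist(y,Γ) < δ } and dist(X(s,θ),Γ) = |s|. Then for every θ and every s with 0 < s < δ, the function y ↦ dist(y,Γ) is differentiable at X(s,θ) and its gradient there equals n(θ); for −δ < s < 0 the gradient equals −n(θ). -/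
open Set

noncomputable section

/-!
If `S` contains the foot `q` and the distance to `S` at the tip `q + t • v` of a segment is at least
its length `t * ‖v‖`, then `t * ‖v‖ - ‖y - (q + t • v)‖ ≤ infDist y S ≤ ‖y - q‖` for every `y`: the
distance lies between two cones with vertices at the ends of the segment. The cones agree on the
segment and have the same derivative inside it, so the distance inherits that derivative.
In a tubular neighbourhood this applies to a normal segment that continues a little beyond the given
point.
-/

open Metric Topology

section NormedSpace

variable {E : Type*} [NormedAddCommGroup E] [NormedSpace ℝ E]

theorem hasFDerivAt_of_le_of_le {f g h : E → ℝ} {f' : E →L[ℝ] ℝ} {a : E}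
    (hf : HasFDerivAt f f' a) (hh : HasFDerivAt h f' a) (hfg : f ≤ᶠ[𝓝 a] g) (hgh : g ≤ᶠ[𝓝 a] h)
    (hfh : f a = h a) : HasFDerivAt g f' a := by
  have hga : g a = f a := le_antisymm (hgh.self_of_nhds.trans_eq hfh.symm) hfg.self_of_nhds
  have gap_isBigO : (fun y ↦ g y - f y) =O[𝓝 a] fun y ↦ h y - f y := by
    refine .of_bound' ?_
    filter_upwards [hfg, hgh] with y hfy hgy
    exact abs_le_abs_of_nonneg (sub_nonneg.2 hfy) (sub_le_sub_right hgy _)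
  have gap_isLittleO : (fun y ↦ h y - f y) =o[𝓝 a] fun y ↦ y - a := by
    simpa [hfh] using (hh.sub hf).isLittleO
  have gap_hasFDerivAt : HasFDerivAt (fun y ↦ g y - f y) (0 : E →L[ℝ] ℝ) a :=
    .of_isLittleO <| by simpa [hga] using gap_isBigO.trans_isLittleO gap_isLittleO
  simpa using hf.fun_add gap_hasFDerivAt

theorem hasFDerivAt_infDist_add_smul {S : Set E} {q v : E} {f' : E →L[ℝ] ℝ} {s t : ℝ}
    (hv : HasFDerivAt (‖·‖) f' v) (hq : q ∈ S) (hs : 0 < s) (hst : s < t)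
    (ht : t * ‖v‖ ≤ infDist (q + t • v) S) :
    HasFDerivAt (infDist · S) f' (q + s • v) := by
  have foot_sub : q + s • v - q = s • v := by module
  have tip_sub : q + s • v - (q + t • v) = (s - t) • v := by module
  have upper_cone : HasFDerivAt (fun y ↦ ‖y - q‖) f' (q + s • v) :=
    (hasFDerivAt_comp_sub q).2 (by simpa only [foot_sub] using hv.hasFDerivAt_norm_smul_pos hs)
  have lower_cone :
      HasFDerivAt (fun y ↦ t * ‖v‖ - ‖y - (q + t • v)‖) f' (q + s • v) := by
    have tip_norm : HasFDerivAt (‖·‖) (-f') (q + s • v - (q + t • v)) := by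
      simpa only [tip_sub] using hv.hasFDerivAt_norm_smul_neg (sub_neg.2 hst)
    simpa only [neg_neg] using ((hasFDerivAt_comp_sub _).2 tip_norm).const_sub (t * ‖v‖)
  refine hasFDerivAt_of_le_of_le lower_cone upper_cone (.of_forall fun y ↦ ?_)
    (.of_forall fun y ↦ ?_) ?_
  · rw [sub_le_iff_le_add, ← dist_eq_norm, dist_comm]
    exact ht.trans infDist_le_infDist_add_dist
  · exact (infDist_le_dist_of_mem hq).trans_eq (dist_eq_norm y q)
  · rw [foot_sub, tip_sub, norm_smul, norm_smul, Real.norm_of_nonneg hs.le,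
      Real.norm_of_nonpos (sub_nonpos.2 hst.le)]
    ring

end NormedSpace

section InnerProductSpace

variable {E : Type*} [NormedAddCommGroup E] [InnerProductSpace ℝ E] [CompleteSpace E]

theorem hasGradientAt_norm {v : E} (hv : v ≠ 0) : HasGradientAt (‖·‖) (‖v‖⁻¹ • v) v := by
  have h_sqrt := (hasStrictFDerivAt_norm_sq v).hasFDerivAt.sqrt
    (pow_ne_zero 2 (norm_ne_zero_iff.2 hv))
  simp only [Real.sqrt_sq (norm_nonneg _)] at h_sqrt
  refine h_sqrt.congr_fderiv ?_
  ext w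
  simp only [smul_apply, coe_innerSL_apply, nsmul_eq_mul, Nat.cast_ofNat, smul_eq_mul, map_smul,
    InnerProductSpace.toDual_apply_apply]
  field_simp

theorem hasGradientAt_infDist_add_smul {S : Set E} {q v : E} {s t : ℝ} (hv : ‖v‖ = 1)
    (hq : q ∈ S) (hs : 0 < s) (hst : s < t) (ht : t ≤ infDist (q + t • v) S) :
    HasGradientAt (infDist · S) v (q + s • v) := by
  have hnorm : HasGradientAt (‖·‖) v v := by
    simpa [hv] using hasGradientAt_norm (norm_ne_zero_iff.1 (hv.trans_ne one_ne_zero))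
  exact hasFDerivAt_infDist_add_smul hnorm.hasFDerivAt hq hs hst (by rwa [hv, mul_one])

theorem stmt_13_general {ι : Type*} {x n : ι → E} {X : ℝ → ι → E} {δ : ℝ}
    (hn : ∀ θ, ‖n θ‖ = 1) (hX : ∀ s θ, X s θ = x θ + s • n θ)
    (hdist : ∀ s θ, |s| < δ → infDist (X s θ) (range x) = |s|) (θ : ι) (s : ℝ) :
    (0 < s → s < δ → HasGradientAt (infDist · (range x)) (n θ) (X s θ)) ∧
      (-δ < s → s < 0 → HasGradientAt (infDist · (range x)) (-n θ) (X s θ)) := by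
  constructor
  · intro hs hsδ
    obtain ⟨t, hst, htδ⟩ := exists_between hsδ
    have ht : |t| = t := abs_of_pos (hs.trans hst)
    rw [hX]
    refine hasGradientAt_infDist_add_smul (hn θ) (mem_range_self θ) hs hst ?_
    rw [← hX, hdist t θ (ht.trans_lt htδ), ht]
  · intro hδs hs
    obtain ⟨t, hδt, hts⟩ := exists_between hδs
    have ht : |t| = -t := abs_of_neg (hts.trans hs)
    rw [hX, ← neg_smul_neg]
    refine hasGradientAt_infDist_add_smul ((norm_neg _).trans (hn θ)) (mem_range_self θ)
      (neg_pos.2 hs) (neg_lt_neg hts) ?_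
    rw [neg_smul_neg, ← hX, hdist t θ (by linarith), ht]

end InnerProductSpace

theorem norm_eq_one_iff_sq_add_sq {v : E2} : ‖v‖ = 1 ↔ v 0 ^ 2 + v 1 ^ 2 = 1 := by
  rw [← pow_eq_one_iff_of_nonneg (norm_nonneg v) two_ne_zero, EuclideanSpace.real_norm_sq_eq,
    Fin.sum_univ_two]

theorem stmt_13
    (L : ℝ) (hL : 0 < L)
    (x : ℝ → E2) (hx : ContDiff ℝ 2 x)
    (hper : ∀ θ, x (θ + L) = x θ)
    (hinj : InjOn x (Ico 0 L))
    (hunit : ∀ θ, deriv x θ 0 ^ 2 + deriv x θ 1 ^ 2 = 1)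
    (n : ℝ → E2)
    (hn : ∀ θ, n θ 0 = -(deriv x θ 1) ∧ n θ 1 = deriv x θ 0)
    (X : ℝ → ℝ → E2) (hX : ∀ s θ, X s θ = x θ + s • n θ)
    (δ : ℝ) (hδ : 0 < δ)
    (hinjX : InjOn (fun p : ℝ × ℝ => X p.1 p.2) (Ioo (-δ) δ ×ˢ Ico 0 L))
    (himg : (fun p : ℝ × ℝ => X p.1 p.2) '' (Ioo (-δ) δ ×ˢ (univ : Set ℝ)) =
      {y : E2 | Metric.infDist y (Set.range x) < δ})
    (hdist : ∀ s θ : ℝ, |s| < δ → Metric.infDist (X s θ) (Set.range x) = |s|) :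
    ∀ θ s : ℝ,
      (0 < s → s < δ →
        HasGradientAt (fun y : E2 => Metric.infDist y (Set.range x)) (n θ) (X s θ)) ∧
      (-δ < s → s < 0 →
        HasGradientAt (fun y : E2 => Metric.infDist y (Set.range x)) (-n θ) (X s θ)) :=
  stmt_13_general
    (fun θ ↦ norm_eq_one_iff_sq_add_sq.2 <| by
      rw [(hn θ).1, (hn θ).2, neg_sq, add_comm, hunit])
    hX hdist
end
end

section
/- Let x : ℝ → ℝ² be a C², L-periodic, unit-speed curve with normal n(θ) = (−x₂'(θ), x₁'(θ)), curvature γ(θ), X(s,θ) = x(θ) + s·n(θ) and J(s,θ) = 1 + sγ(θ), and let δ > 0 be small enough that X is a C¹ diffeomorphism from (−δ,δ)×(ℝ/LZ) onto V_δ. Let q be a twice continuously differentiable function on V_δ and set q̃(s,θ) = q(X(s,θ)). Then for all (s,θ) ∈ (−δ,δ)×ℝ: (Δq)(X(s,θ)) = (1/J(s,θ)) ∂_s( J(s,θ) ∂_s q̃(s,θ) ) + (1/J(s,θ)) ∂_θ( (1/J(s,θ)) ∂_θ q̃(s,θ) ), where Δq = ∂₁₁q + ∂₂₂q. -/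
open Set

noncomputable section

/-!
A plane curve with unit tangent `T` and normal `n` satisfies `T' = -γ n` and `n' = γ T`, so the
coordinate map `X(s, θ) = x(θ) + s n(θ)` has `∂_s X = n` and `∂_θ X = J T`. By the chain rule
`∂_s q̃ = Dq(n)` and `J⁻¹ ∂_θ q̃ = Dq(T)`. A further derivative gives
`∂_s (J ∂_s q̃) = J D²q(n, n) + γ Dq(n)` and `∂_θ (J⁻¹ ∂_θ q̃) = J D²q(T, T) - γ Dq(n)`.
The first-order terms cancel in the sum, and what remains is `J` times the trace of `D²q` in the
orthonormal frame `(T, n)`, i.e. `J Δq`.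
-/

open Filter InnerProductSpace Laplacian Module Topology

section AlongCurves

variable {E F : Type*} [NormedAddCommGroup E] [NormedSpace ℝ E]
  [NormedAddCommGroup F] [NormedSpace ℝ F]

theorem hasFDerivAt_fderiv_of_contDiffAt {q : E → F} {y : E} (hq : ContDiffAt ℝ 2 q y) :
    HasFDerivAt (fderiv ℝ q) (fderiv ℝ (fderiv ℝ q) y) y :=
  ((hq.fderiv_right (m := 1) (by norm_num)).differentiableAt one_ne_zero).hasFDerivAt

theorem eventually_differentiableAt_comp {q : E → F} {c : ℝ → E} {t : ℝ}
    (hq : ContDiffAt ℝ 2 q (c t)) (hc : ContinuousAt c t) :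
    ∀ᶠ τ in 𝓝 t, DifferentiableAt ℝ q (c τ) :=
  hc.eventually <| (hq.eventually (by simp)).mono fun _ h => h.differentiableAt two_ne_zero

theorem hasDerivAt_fderiv_comp_apply {q : E → F} {c v : ℝ → E} {c' v' : E} {t : ℝ}
    (hq : ContDiffAt ℝ 2 q (c t)) (hc : HasDerivAt c c' t) (hv : HasDerivAt v v' t) :
    HasDerivAt (fun τ => fderiv ℝ q (c τ) (v τ))
      (fderiv ℝ (fderiv ℝ q) (c t) c' (v t) + fderiv ℝ q (c t) v') t :=
  ((hasFDerivAt_fderiv_of_contDiffAt hq).comp_hasDerivAt t hc).clm_apply hv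

end AlongCurves

section NormalCoordinates

variable {E F : Type*} [NormedAddCommGroup E] [NormedSpace ℝ E]
  [NormedAddCommGroup F] [NormedSpace ℝ F]

/-- The normal coordinate map `X(s, θ) = x(θ) + s n(θ)` around a curve `x` with normal field `n`;
each `normalMap x n s` is a parallel curve of `x`. -/
def normalMap (x n : ℝ → E) (s θ : ℝ) : E := x θ + s • n θ

/-- The Jacobian `J(s, θ) = 1 + s γ(θ)` of the normal coordinate map, for a curvature function `γ`;
it is the factor by which the parallel curve at signed distance `s` is longer than the original. -/
def normalJacobian (γ : ℝ → ℝ) (s θ : ℝ) : ℝ := 1 + s * γ θ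

/-- The Frenet equations of a curve `x` with tangent `T`, normal `n` and curvature `γ`, with the
sign convention `n' = γ T` (so a circle has positive `γ` when `n` points outwards). -/
structure FrenetEquations (x T n : ℝ → E) (γ : ℝ → ℝ) : Prop where
  hasDerivAt_curve : ∀ θ, HasDerivAt x (T θ) θ
  hasDerivAt_tangent : ∀ θ, HasDerivAt T (-γ θ • n θ) θ
  hasDerivAt_normal : ∀ θ, HasDerivAt n (γ θ • T θ) θ

theorem hasDerivAt_normalMap_left (x n : ℝ → E) (s θ : ℝ) :
    HasDerivAt (fun t => normalMap x n t θ) (n θ) s := by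
  simpa only [normalMap, id, one_smul] using ((hasDerivAt_id s).smul_const (n θ)).const_add (x θ)

theorem hasDerivAt_normalJacobian_left (γ : ℝ → ℝ) (s θ : ℝ) :
    HasDerivAt (fun t => normalJacobian γ t θ) (γ θ) s := by
  simpa only [normalJacobian, id, one_mul] using ((hasDerivAt_id s).mul_const (γ θ)).const_add 1

theorem hasDerivAt_normalJacobian_smul_deriv {x n : ℝ → E} {q : E → F} {s θ : ℝ} (γ : ℝ → ℝ)
    (hq : ContDiffAt ℝ 2 q (normalMap x n s θ)) :
    HasDerivAt (fun t => normalJacobian γ t θ • deriv (fun r => q (normalMap x n r θ)) t)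
      (normalJacobian γ s θ • fderiv ℝ (fderiv ℝ q) (normalMap x n s θ) (n θ) (n θ)
        + γ θ • fderiv ℝ q (normalMap x n s θ) (n θ)) s := by
  have hX := hasDerivAt_normalMap_left x n
  have hgrad : HasDerivAt (fun t => fderiv ℝ q (normalMap x n t θ) (n θ))
      (fderiv ℝ (fderiv ℝ q) (normalMap x n s θ) (n θ) (n θ)) s := by
    simpa only [map_zero, add_zero] using hasDerivAt_fderiv_comp_apply
      (c := fun t => normalMap x n t θ) hq (hX s θ) (hasDerivAt_const s (n θ))
  refine ((hasDerivAt_normalJacobian_left γ s θ).smul hgrad).congr_of_eventuallyEq ?_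
  filter_upwards [eventually_differentiableAt_comp hq (hX s θ).continuousAt] with t ht
  exact congrArg _ (ht.hasFDerivAt.comp_hasDerivAt t (hX t θ)).deriv

namespace FrenetEquations

variable {x T n : ℝ → E} {γ : ℝ → ℝ}

theorem hasDerivAt_normalMap (h : FrenetEquations x T n γ) (s θ : ℝ) :
    HasDerivAt (normalMap x n s) (normalJacobian γ s θ • T θ) θ := by
  refine ((h.hasDerivAt_curve θ).add ((h.hasDerivAt_normal θ).const_smul s)).congr_deriv ?_
  rw [normalJacobian, add_smul, one_smul, smul_smul]

theorem hasDerivAt_inv_normalJacobian_smul_deriv (h : FrenetEquations x T n γ) {q : E → F}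
    {s θ : ℝ} (hγ : ContinuousAt γ θ) (hJ : normalJacobian γ s θ ≠ 0)
    (hq : ContDiffAt ℝ 2 q (normalMap x n s θ)) :
    HasDerivAt (fun w => (1 / normalJacobian γ s w) • deriv (fun w' => q (normalMap x n s w')) w)
      (normalJacobian γ s θ • fderiv ℝ (fderiv ℝ q) (normalMap x n s θ) (T θ) (T θ)
        - γ θ • fderiv ℝ q (normalMap x n s θ) (n θ)) θ := by
  have hX := h.hasDerivAt_normalMap s
  have hgrad : HasDerivAt (fun w => fderiv ℝ q (normalMap x n s w) (T w))
      (normalJacobian γ s θ • fderiv ℝ (fderiv ℝ q) (normalMap x n s θ) (T θ) (T θ)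
        - γ θ • fderiv ℝ q (normalMap x n s θ) (n θ)) θ := by
    simpa only [map_smul, smul_apply, neg_smul, map_neg, sub_eq_add_neg] using
      hasDerivAt_fderiv_comp_apply hq (hX θ) (h.hasDerivAt_tangent θ)
  have hJ_near : ∀ᶠ w in 𝓝 θ, normalJacobian γ s w ≠ 0 :=
    (continuousAt_const.add (continuousAt_const.mul hγ)).eventually_ne hJ
  refine hgrad.congr_of_eventuallyEq ?_
  filter_upwards [eventually_differentiableAt_comp hq (hX θ).continuousAt, hJ_near] with w hw hJw
  have hchain : deriv (fun w' => q (normalMap x n s w')) w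
      = normalJacobian γ s w • fderiv ℝ q (normalMap x n s w) (T w) :=
    (hw.hasFDerivAt.comp_hasDerivAt w (hX w)).deriv.trans (map_smul _ _ _)
  rw [hchain, smul_smul, one_div_mul_cancel hJw, one_smul]

theorem fderiv_fderiv_tangent_add_normal (h : FrenetEquations x T n γ) {q : E → F}
    {s θ : ℝ} (hγ : ContinuousAt γ θ) (hJ : normalJacobian γ s θ ≠ 0)
    (hq : ContDiffAt ℝ 2 q (normalMap x n s θ)) :
    fderiv ℝ (fderiv ℝ q) (normalMap x n s θ) (T θ) (T θ)
        + fderiv ℝ (fderiv ℝ q) (normalMap x n s θ) (n θ) (n θ) =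
      (1 / normalJacobian γ s θ) •
          deriv (fun t => normalJacobian γ t θ • deriv (fun r => q (normalMap x n r θ)) t) s +
        (1 / normalJacobian γ s θ) •
          deriv (fun w => (1 / normalJacobian γ s w) •
            deriv (fun w' => q (normalMap x n s w')) w) θ := by
  rw [(hasDerivAt_normalJacobian_smul_deriv γ hq).deriv,
    (h.hasDerivAt_inv_normalJacobian_smul_deriv hγ hJ hq).deriv, ← smul_add,
    add_add_sub_cancel, ← smul_add, smul_smul, one_div_mul_cancel hJ, one_smul, add_comm]

end FrenetEquations

end NormalCoordinates

section OrthonormalFrame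

variable {E F : Type*} [NormedAddCommGroup E] [InnerProductSpace ℝ E]
  [NormedAddCommGroup F] [NormedSpace ℝ F]

theorem exists_orthonormalBasis_coe_eq {𝕜 V ι : Type*} [RCLike 𝕜] [NormedAddCommGroup V]
    [InnerProductSpace 𝕜 V] [FiniteDimensional 𝕜 V] [Fintype ι] {v : ι → V}
    (hv : Orthonormal 𝕜 v) (hcard : finrank 𝕜 V = Fintype.card ι) :
    ∃ b : OrthonormalBasis ι 𝕜 V, ⇑b = v := by
  obtain ⟨b, hb⟩ := Orthonormal.exists_orthonormalBasis_extension_of_card_eq hcard (s := univ)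
    (hv.comp _ Subtype.val_injective)
  exact ⟨b, funext fun i => hb i (mem_univ i)⟩

theorem inner_deriv_add_inner_deriv_eq_zero {u v : ℝ → E} {u' v' : E} {c t : ℝ}
    (huv : ∀ τ, inner ℝ (u τ) (v τ) = c) (hu : HasDerivAt u u' t) (hv : HasDerivAt v v' t) :
    inner ℝ (u t) v' + inner ℝ u' (v t) = 0 := by
  have hconst : HasDerivAt (fun τ => inner ℝ (u τ) (v τ)) 0 t := by
    simpa only [huv] using hasDerivAt_const t c
  exact (hu.inner ℝ hv).unique hconst

theorem inner_deriv_eq_zero_of_norm_eq {u : ℝ → E} {u' : E} {c t : ℝ}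
    (hnorm : ∀ τ, ‖u τ‖ = c) (hu : HasDerivAt u u' t) : inner ℝ (u t) u' = 0 := by
  have hsq (τ) : inner ℝ (u τ) (u τ) = c ^ 2 := by rw [real_inner_self_eq_norm_sq, hnorm]
  have hsum := inner_deriv_add_inner_deriv_eq_zero hsq hu hu
  rw [real_inner_comm (u t) u'] at hsum
  linarith

theorem inner_smul_add_inner_smul_of_orthonormal (hdim : finrank ℝ E = 2) {u v : E}
    (huv : Orthonormal ℝ ![u, v]) (w : E) :
    inner ℝ u w • u + inner ℝ v w • v = w := by
  have : FiniteDimensional ℝ E := .of_finrank_pos (hdim ▸ two_pos)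
  obtain ⟨b, hb⟩ := exists_orthonormalBasis_coe_eq huv hdim
  simpa [hb, Fin.sum_univ_two] using b.sum_repr' w

theorem frenetEquations_of_orthonormal (hdim : finrank ℝ E = 2) {x n : ℝ → E} {γ : ℝ → ℝ}
    (hx : ContDiff ℝ 2 x) (hn : Differentiable ℝ n)
    (hframe : ∀ θ, Orthonormal ℝ ![deriv x θ, n θ])
    (hγ : ∀ θ, γ θ = -inner ℝ (n θ) (deriv (deriv x) θ)) :
    FrenetEquations x (deriv x) n γ := by
  have hT (θ) : HasDerivAt (deriv x) (deriv (deriv x) θ) θ :=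
    (hx.differentiable_deriv_two θ).hasDerivAt
  have hN (θ) : HasDerivAt n (deriv n θ) θ := (hn θ).hasDerivAt
  have hTT' (θ) : inner ℝ (deriv x θ) (deriv (deriv x) θ) = 0 :=
    inner_deriv_eq_zero_of_norm_eq (fun τ => (hframe τ).norm_eq_one 0) (hT θ)
  have hNN' (θ) : inner ℝ (n θ) (deriv n θ) = 0 :=
    inner_deriv_eq_zero_of_norm_eq (fun τ => (hframe τ).norm_eq_one 1) (hN θ)
  have hTN (θ) : inner ℝ (deriv x θ) (n θ) = 0 := (hframe θ).inner_eq_zero zero_ne_one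
  have hTN' (θ) : inner ℝ (deriv x θ) (deriv n θ) = γ θ := by
    have hsum := inner_deriv_add_inner_deriv_eq_zero hTN (hT θ) (hN θ)
    rw [real_inner_comm (n θ)] at hsum
    linarith [hγ θ]
  have expand (θ) := inner_smul_add_inner_smul_of_orthonormal hdim (hframe θ)
  refine ⟨fun θ => (hx.differentiable two_ne_zero θ).hasDerivAt,
    fun θ => (hT θ).congr_deriv ?_, fun θ => (hN θ).congr_deriv ?_⟩
  · rw [← expand θ (deriv (deriv x) θ), hTT', zero_smul, zero_add, hγ, neg_neg]
  · rw [← expand θ (deriv n θ), hNN', hTN', zero_smul, add_zero]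

variable [FiniteDimensional ℝ E]

theorem laplacian_eq_sum_fderiv_fderiv {ι : Type*} [Fintype ι]
    (b : OrthonormalBasis ι ℝ E) (q : E → F) (y : E) :
    Δ q y = ∑ i, fderiv ℝ (fderiv ℝ q) y (b i) (b i) := by
  simp [laplacian_eq_iteratedFDeriv_orthonormalBasis q b, iteratedFDeriv_two_apply]

theorem laplacian_eq_of_orthonormal (hdim : finrank ℝ E = 2) {u v : E}
    (huv : Orthonormal ℝ ![u, v]) (q : E → F) (y : E) :
    Δ q y = fderiv ℝ (fderiv ℝ q) y u u + fderiv ℝ (fderiv ℝ q) y v v := by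
  obtain ⟨b, hb⟩ := exists_orthonormalBasis_coe_eq huv hdim
  simp [laplacian_eq_sum_fderiv_fderiv b, Fin.sum_univ_two, hb]

theorem stmt_16_general (hdim : finrank ℝ E = 2) {x n : ℝ → E} {γ : ℝ → ℝ}
    (hx : ContDiff ℝ 2 x) (hn : Differentiable ℝ n)
    (hframe : ∀ θ, Orthonormal ℝ ![deriv x θ, n θ])
    (hγ : ∀ θ, γ θ = -inner ℝ (n θ) (deriv (deriv x) θ))
    {q : E → F} {s θ : ℝ} (hJ : normalJacobian γ s θ ≠ 0)
    (hq : ContDiffAt ℝ 2 q (normalMap x n s θ)) :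
    Δ q (normalMap x n s θ) =
      (1 / normalJacobian γ s θ) •
          deriv (fun t => normalJacobian γ t θ • deriv (fun r => q (normalMap x n r θ)) t) s +
        (1 / normalJacobian γ s θ) •
          deriv (fun w => (1 / normalJacobian γ s w) •
            deriv (fun w' => q (normalMap x n s w')) w) θ := by
  have hγ_cont : Continuous γ := by
    rw [funext hγ]
    exact (hn.continuous.inner hx.deriv'.continuous_deriv_one).neg
  rw [laplacian_eq_of_orthonormal hdim (hframe θ)]
  exact (frenetEquations_of_orthonormal hdim hx hn hframe hγ).fderiv_fderiv_tangent_add_normal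
    hγ_cont.continuousAt hJ hq

end OrthonormalFrame

section Cartesian

theorem pd_pd_eq_fderiv_fderiv {q : E2 → ℝ} {y : E2} (hq : ContDiffAt ℝ 2 q y) (i j : Fin 2) :
    pd i (pd j q) y =
      fderiv ℝ (fderiv ℝ q) y (EuclideanSpace.single i 1) (EuclideanSpace.single j 1) := by
  have h : HasFDerivAt (pd j q) _ y := (hasFDerivAt_fderiv_of_contDiffAt hq).clm_apply
    (hasFDerivAt_const (EuclideanSpace.single j (1 : ℝ)) y)
  rw [pd, h.fderiv]
  simp

theorem laplacian_eq_pd_pd {q : E2 → ℝ} {y : E2} (hq : ContDiffAt ℝ 2 q y) :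
    Δ q y = pd 0 (pd 0 q) y + pd 1 (pd 1 q) y := by
  simp [laplacian_eq_sum_fderiv_fderiv (EuclideanSpace.basisFun (Fin 2) ℝ), Fin.sum_univ_two,
    pd_pd_eq_fderiv_fderiv hq]

theorem orthonormal_of_eq_rotation {v m : E2} (hv : v 0 ^ 2 + v 1 ^ 2 = 1)
    (hm : m 0 = -v 1 ∧ m 1 = v 0) : Orthonormal ℝ ![v, m] := by
  have hv_norm : ‖v‖ = 1 := by simp [EuclideanSpace.norm_eq, Fin.sum_univ_two, hv]
  have hm_norm : ‖m‖ = 1 := by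
    simp [EuclideanSpace.norm_eq, Fin.sum_univ_two, hm, add_comm (v 1 ^ 2), hv]
  have hvm : inner ℝ v m = 0 := by
    simp [PiLp.inner_apply, Fin.sum_univ_two, hm, mul_comm (v 0)]
  simp [orthonormal_vecCons_iff, hv_norm, hm_norm, hvm]

theorem differentiable_of_eq_rotation {v m : ℝ → E2} (hv : Differentiable ℝ v)
    (hm : ∀ θ, m θ 0 = -v θ 1 ∧ m θ 1 = v θ 0) : Differentiable ℝ m := by
  have hv_coord := differentiable_euclidean.1 hv
  refine differentiable_euclidean.2 (Fin.forall_fin_two.2 ⟨?_, ?_⟩)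
  · simpa only [hm] using (hv_coord 1).fun_neg
  · simpa only [hm] using hv_coord 0

theorem inner_eq_of_eq_rotation {v m : E2} (hm : m 0 = -v 1 ∧ m 1 = v 0) (a : E2) :
    inner ℝ m a = v 0 * a 1 - a 0 * v 1 := by
  simp only [PiLp.inner_apply, Fin.sum_univ_two, hm, Real.inner_apply]
  ring

end Cartesian

theorem stmt_16
    (L : ℝ) (hL : 0 < L)
    (x : ℝ → E2) (hx : ContDiff ℝ 2 x)
    (hper : ∀ θ, x (θ + L) = x θ)
    (hinj : InjOn x (Ico 0 L))
    (hunit : ∀ θ, deriv x θ 0 ^ 2 + deriv x θ 1 ^ 2 = 1)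
    (n : ℝ → E2) (γ : ℝ → ℝ)
    (hn : ∀ θ, n θ 0 = -(deriv x θ 1) ∧ n θ 1 = deriv x θ 0)
    (hγ : ∀ θ, γ θ = deriv (deriv x) θ 0 * deriv x θ 1 - deriv x θ 0 * deriv (deriv x) θ 1)
    (X : ℝ → ℝ → E2) (hX : ∀ s θ, X s θ = x θ + s • n θ)
    (J : ℝ → ℝ → ℝ) (hJ : ∀ s θ, J s θ = 1 + s * γ θ)
    -- δ is small enough that X is a C¹ diffeomorphism from (−δ,δ)×(ℝ/LZ) onto V_δ
    (δ : ℝ) (hδ : 0 < δ)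
    (hinjX : InjOn (fun p : ℝ × ℝ => X p.1 p.2) (Ioo (-δ) δ ×ˢ Ico 0 L))
    (himg : (fun p : ℝ × ℝ => X p.1 p.2) '' (Ioo (-δ) δ ×ˢ (univ : Set ℝ)) =
      {y : E2 | Metric.infDist y (Set.range x) < δ})
    (hdist : ∀ s θ : ℝ, |s| < δ → Metric.infDist (X s θ) (Set.range x) = |s|)
    (hJpos : ∀ s θ : ℝ, |s| < δ → 0 < J s θ)
    -- a C² function on V_δ, expressed in the geodesic coordinates
    (q : E2 → ℝ)
    (hq : ContDiffOn ℝ 2 q {y : E2 | Metric.infDist y (Set.range x) < δ})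
    (qt : ℝ → ℝ → ℝ) (hqt : ∀ s θ, qt s θ = q (X s θ)) :
    ∀ s θ : ℝ, -δ < s → s < δ →
      pd 0 (pd 0 q) (X s θ) + pd 1 (pd 1 q) (X s θ) =
        (1 / J s θ) * deriv (fun t => J t θ * deriv (fun r => qt r θ) t) s +
        (1 / J s θ) * deriv (fun w => (1 / J s w) * deriv (fun w' => qt s w') w) θ := by
  obtain rfl : X = normalMap x n := funext₂ hX
  obtain rfl : J = normalJacobian γ := funext₂ hJ
  obtain rfl : qt = fun s θ => q (normalMap x n s θ) := funext₂ hqt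
  intro s θ hs_neg hs_pos
  have hs : |s| < δ := abs_lt.2 ⟨hs_neg, hs_pos⟩
  have hV : IsOpen {y : E2 | Metric.infDist y (range x) < δ} :=
    isOpen_lt (Metric.continuous_infDist_pt _) continuous_const
  have hq_at : ContDiffAt ℝ 2 q (normalMap x n s θ) :=
    hq.contDiffAt (hV.mem_nhds ((hdist s θ hs).trans_lt hs))
  have hγ_inner (w) : γ w = -inner ℝ (n w) (deriv (deriv x) w) := by
    rw [inner_eq_of_eq_rotation (hn w), hγ, neg_sub]
  rw [← laplacian_eq_pd_pd hq_at]
  exact stmt_16_general finrank_euclideanSpace_fin hx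
    (differentiable_of_eq_rotation hx.differentiable_deriv_two hn)
    (fun w => orthonormal_of_eq_rotation (hunit w) (hn w)) hγ_inner (hJpos s θ hs).ne' hq_at
end
end

section
/- Let Ω ⊂ ℝ² be a bounded open set, α ∈ (0,1), and χ ∈ C_c^∞(Ω). Then there exist positive constants C and D, depending only on χ, α and Ω, with the following property: for every matrix-valued function G = (G_{ij}) that is twice continuously differentiable on an open neighborhood of the closure of Ω and every P that is twice continuously differentiable on an open neighborhood of the closure of Ω and satisfies −ΔP = Σ_{i,j=1}^2 ∂_i∂_j G_{ij} at every point of Ω, one has ‖χP‖_{C^{0,α}(Ω)} ≤ C ‖G‖_{C^{0,α}(Ω)} + D ‖P‖_{L^∞(Ω)}. -/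
open MeasureTheory Set

noncomputable section

/-- `f` is α-Hölder on `S` with constant `M`. -/
def IsHolderOn (α M : ℝ) (S : Set E2) (f : E2 → ℝ) : Prop :=
  ∀ y ∈ S, ∀ z ∈ S, |f y - f z| ≤ M * dist y z ^ α

/-- The `C^{0,α}` norm on `S`: sup norm plus least Hölder constant. -/
noncomputable def holderNorm (α : ℝ) (S : Set E2) (f : E2 → ℝ) : ℝ :=
  (⨆ y ∈ S, |f y|) + sInf {M : ℝ | 0 ≤ M ∧ IsHolderOn α M S f}

/-!
Average `P` over balls with a smooth radial weight `k`: write `A(x, r)` for the average at scale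
`r`. Then `A(x, 0)` is a multiple of `P x`. Since `k z • z` is the gradient of a radial potential
`Ψ`, `∂A/∂r` is an average of `ΔP`; the equation and two integrations by parts turn it into `r⁻¹`
times the average of `G` against the Hessian of `Ψ`, a kernel of integral zero.

For `d = |x - y|`, compare `P x` and `P y` through `A`. On scales `r ≤ d` the cancellation gives
`∂A/∂r = O(r ^ (α - 1))`, which integrates to `O(d ^ α)`. On scales `d ≤ r ≤ δ` the averages at `x`
and at `y` nearly agree, and the difference of their derivatives is `O(d r ^ (α - 2))`, which again
integrates to `O(d ^ α)`. At the top scale `δ` only the sup norm of `P` enters. The estimate is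
purely local, so the cutoff `χ` interacts with it only through the Leibniz rule.
-/

open Filter Topology Metric Function
open scoped NNReal RealInnerProductSpace

section SupNorm

variable {X F : Type*} [SeminormedAddCommGroup F] {S : Set X} {f : X → F}

/-- The sup norm of `f` on `S`; it takes the junk value `0` if `f` is unbounded on `S`. -/
def supNormOn (S : Set X) (f : X → F) : ℝ :=
  ⨆ y ∈ S, ‖f y‖

lemma supNormOn_nonneg : 0 ≤ supNormOn S f :=
  Real.iSup_nonneg fun _ => Real.iSup_nonneg fun _ => norm_nonneg _

lemma supNormOn_le {B : ℝ} (hB : 0 ≤ B) (h : ∀ y ∈ S, ‖f y‖ ≤ B) : supNormOn S f ≤ B :=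
  Real.iSup_le (fun y => Real.iSup_le (h y) hB) hB

lemma norm_le_supNormOn (hf : Bornology.IsBounded (f '' S)) {y : X} (hy : y ∈ S) :
    ‖f y‖ ≤ supNormOn S f := by
  obtain ⟨B, hB⟩ := isBounded_iff_forall_norm_le.1 hf
  have hB' : ∀ w ∈ S, ‖f w‖ ≤ B := forall_mem_image.1 hB
  have hbdd : BddAbove (range fun w => ⨆ _ : w ∈ S, ‖f w‖) :=
    ⟨B, forall_mem_range.2 fun w => Real.iSup_le (hB' w) ((norm_nonneg _).trans (hB' y hy))⟩
  exact (ciSup_pos hy).symm.trans_le (le_ciSup hbdd y)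

lemma isBounded_image_of_continuousOn_closure [PseudoMetricSpace X] [ProperSpace X]
    (hS : Bornology.IsBounded S) (hf : ContinuousOn f (closure S)) :
    Bornology.IsBounded (f '' S) :=
  (hS.isCompact_closure.image_of_continuousOn hf).isBounded.subset (image_mono subset_closure)

end SupNorm

section HolderNorms

variable {X F : Type*} [PseudoMetricSpace X] [SeminormedAddCommGroup F]
  {α M : ℝ} {S : Set X} {f : X → F}

/-- `f` is `α`-Hölder on `S` with constant `M`. This is `IsHolderOn` for maps between arbitrary
spaces, and unfolds to it on the plane. -/
def HolderBoundOn (α M : ℝ) (S : Set X) (f : X → F) : Prop :=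
  ∀ y ∈ S, ∀ z ∈ S, ‖f y - f z‖ ≤ M * dist y z ^ α

/-- The least `α`-Hölder constant of `f` on `S`; it takes the junk value `0` if there is none. -/
def holderSeminormOn (α : ℝ) (S : Set X) (f : X → F) : ℝ :=
  sInf {M : ℝ | 0 ≤ M ∧ HolderBoundOn α M S f}

/-- The `C^{0,α}` norm on `S`. This is `holderNorm` for maps between arbitrary spaces, and unfolds
to it on the plane. -/
def holderNormOn (α : ℝ) (S : Set X) (f : X → F) : ℝ :=
  supNormOn S f + holderSeminormOn α S f

lemma holderSeminormOn_nonneg : 0 ≤ holderSeminormOn α S f :=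
  Real.sInf_nonneg fun _ h => h.1

lemma holderSeminormOn_le (hM : 0 ≤ M) (h : HolderBoundOn α M S f) :
    holderSeminormOn α S f ≤ M :=
  csInf_le ⟨0, fun _ h => h.1⟩ ⟨hM, h⟩

lemma holderSeminormOn_le_holderNormOn : holderSeminormOn α S f ≤ holderNormOn α S f :=
  le_add_of_nonneg_left supNormOn_nonneg

lemma HolderBoundOn.mono {M' : ℝ} {S' : Set X} (h : HolderBoundOn α M S f) (hM : M ≤ M')
    (hS : S' ⊆ S) : HolderBoundOn α M' S' f := fun y hy z hz =>
  (h y (hS hy) z (hS hz)).trans (by gcongr)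

lemma HolderBoundOn.congr {g : X → F} (h : HolderBoundOn α M S f) (hfg : EqOn g f S) :
    HolderBoundOn α M S g := fun y hy z hz => by
  rw [hfg hy, hfg hz]
  exact h y hy z hz

lemma holderBoundOn_holderSeminormOn (h : ∃ M, 0 ≤ M ∧ HolderBoundOn α M S f) :
    HolderBoundOn α (holderSeminormOn α S f) S f := by
  intro y hy z hz
  obtain ⟨M, hM, hMf⟩ := h
  rcases (Real.rpow_nonneg (dist_nonneg (x := y) (y := z)) α).eq_or_lt with h0 | hpos
  · simpa [← h0] using hMf y hy z hz
  · rw [← div_le_iff₀ hpos]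
    exact le_csInf ⟨M, hM, hMf⟩ fun N hN => (div_le_iff₀ hpos).2 (hN.2 y hy z hz)

lemma le_rpow_one_sub_mul_rpow {d R : ℝ} (hα : α ∈ Icc (0 : ℝ) 1) (hd : 0 ≤ d) (hdR : d ≤ R) :
    d ≤ R ^ (1 - α) * d ^ α := by
  have h1α : 0 ≤ 1 - α := sub_nonneg.2 hα.2
  calc d = d ^ (1 - α) * d ^ α := by rw [← Real.rpow_add_of_nonneg hd h1α hα.1]; simp
    _ ≤ R ^ (1 - α) * d ^ α := by gcongr

lemma one_le_rpow_neg_mul_rpow {d R : ℝ} (hα : 0 ≤ α) (hR : 0 < R) (hRd : R ≤ d) :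
    1 ≤ R ^ (-α) * d ^ α := by
  calc (1 : ℝ) = R ^ (-α) * R ^ α := by rw [← Real.rpow_add hR]; simp
    _ ≤ R ^ (-α) * d ^ α := by gcongr

lemma holderBoundOn_of_lipschitzOnWith {L : ℝ≥0} (hα : α ∈ Icc (0 : ℝ) 1)
    (hS : Bornology.IsBounded S) (hf : LipschitzOnWith L f S) :
    HolderBoundOn α (L * diam S ^ (1 - α)) S f := fun y hy z hz =>
  calc ‖f y - f z‖ ≤ L * dist y z := by
        simpa only [dist_eq_norm] using hf.dist_le_mul y hy z hz
    _ ≤ L * (diam S ^ (1 - α) * dist y z ^ α) := by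
        gcongr
        exact le_rpow_one_sub_mul_rpow hα dist_nonneg (dist_le_diam_of_mem hS hy hz)
    _ = L * diam S ^ (1 - α) * dist y z ^ α := by ring

lemma norm_smul_sub_smul_le_of_near {χ : X → ℝ} {P : X → F} [NormedSpace ℝ F] {L : ℝ≥0}
    {B H T δ : ℝ} {y z : X} (hα : α ∈ Icc (0 : ℝ) 1) (hχ : LipschitzWith L χ) (hB : ‖χ y‖ ≤ B)
    (hT : ‖P z‖ ≤ T) (hyz : dist y z ≤ δ) (hP : ‖P y - P z‖ ≤ H * dist y z ^ α) :
    ‖χ y • P y - χ z • P z‖ ≤ (B * H + L * δ ^ (1 - α) * T) * dist y z ^ α := by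
  have hB₀ : 0 ≤ B := (norm_nonneg _).trans hB
  have hχyz : ‖χ y - χ z‖ ≤ L * (δ ^ (1 - α) * dist y z ^ α) := by
    rw [← dist_eq_norm]
    exact (hχ.dist_le_mul y z).trans (by gcongr; exact le_rpow_one_sub_mul_rpow hα dist_nonneg hyz)
  calc ‖χ y • P y - χ z • P z‖ = ‖χ y • (P y - P z) + (χ y - χ z) • P z‖ := by
        congr 1; module
    _ ≤ ‖χ y‖ * ‖P y - P z‖ + ‖χ y - χ z‖ * ‖P z‖ := by
        simpa only [norm_smul] using norm_add_le (χ y • (P y - P z)) ((χ y - χ z) • P z)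
    _ ≤ B * (H * dist y z ^ α) + L * (δ ^ (1 - α) * dist y z ^ α) * T := by
        gcongr
        exact (norm_nonneg _).trans hχyz
    _ = (B * H + L * δ ^ (1 - α) * T) * dist y z ^ α := by ring

lemma norm_smul_sub_smul_le_of_far {χ : X → ℝ} {P : X → F} [NormedSpace ℝ F] {B T δ : ℝ}
    {y z : X} (hα : 0 ≤ α) (hδ : 0 < δ) (hB : ∀ x, ‖χ x‖ ≤ B) (hTy : ‖P y‖ ≤ T) (hTz : ‖P z‖ ≤ T)
    (hyz : δ ≤ dist y z) :
    ‖χ y • P y - χ z • P z‖ ≤ 2 * B * δ ^ (-α) * T * dist y z ^ α := by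
  have hB₀ : 0 ≤ B := (norm_nonneg _).trans (hB y)
  have hT₀ : 0 ≤ T := (norm_nonneg _).trans hTy
  calc ‖χ y • P y - χ z • P z‖ ≤ ‖χ y‖ * ‖P y‖ + ‖χ z‖ * ‖P z‖ := by
        simpa only [norm_smul] using norm_sub_le (χ y • P y) (χ z • P z)
    _ ≤ B * T + B * T := by gcongr <;> exact hB _
    _ = 2 * B * T * 1 := by ring
    _ ≤ 2 * B * T * (δ ^ (-α) * dist y z ^ α) := by
        gcongr
        exact one_le_rpow_neg_mul_rpow hα hδ hyz
    _ = 2 * B * δ ^ (-α) * T * dist y z ^ α := by ring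

lemma holderBoundOn_smul_of_local {χ : X → ℝ} {P : X → F} [NormedSpace ℝ F] {L : ℝ≥0}
    {B H T δ : ℝ} (hα : α ∈ Icc (0 : ℝ) 1) (hδ : 0 < δ) (hχ : LipschitzWith L χ)
    (hB : ∀ x, ‖χ x‖ ≤ B) (hT : ∀ x ∈ S, ‖P x‖ ≤ T) (hH : 0 ≤ H)
    (hP : ∀ y ∈ support χ, ∀ z ∈ S, dist y z ≤ δ → ‖P y - P z‖ ≤ H * dist y z ^ α) :
    HolderBoundOn α (B * H + (L * δ ^ (1 - α) + 2 * B * δ ^ (-α)) * T) S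
      (fun x => χ x • P x) := by
  intro y hy z hz
  have hB₀ : 0 ≤ B := (norm_nonneg _).trans (hB y)
  have hT₀ : 0 ≤ T := (norm_nonneg _).trans (hT y hy)
  wlog hχy : χ y ≠ 0 generalizing y z
  · by_cases hχz : χ z = 0
    · simp only [not_ne_iff.1 hχy, hχz, zero_smul, sub_self, norm_zero]
      positivity
    · rw [norm_sub_rev, dist_comm]
      exact this z hz y hy hχz
  rcases le_total (dist y z) δ with hd | hd
  · refine (norm_smul_sub_smul_le_of_near hα hχ (hB y) (hT z hz) hd (hP y hχy z hz hd)).trans ?_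
    gcongr ?_ * _
    have : 0 ≤ 2 * B * δ ^ (-α) * T := by positivity
    linarith
  · refine (norm_smul_sub_smul_le_of_far hα.1 hδ hB (hT y hy) (hT z hz) hd).trans ?_
    gcongr ?_ * _
    have : 0 ≤ B * H + L * δ ^ (1 - α) * T := by positivity
    linarith

lemma holderNormOn_smul_le_of_local {χ : X → ℝ} {P : X → F} [NormedSpace ℝ F] {L : ℝ≥0}
    {B H δ : ℝ} (hα : α ∈ Icc (0 : ℝ) 1) (hδ : 0 < δ) (hχ : LipschitzWith L χ) (hB₀ : 0 ≤ B)
    (hB : ∀ x, ‖χ x‖ ≤ B) (hPb : Bornology.IsBounded (P '' S)) (hH : 0 ≤ H)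
    (hP : ∀ y ∈ support χ, ∀ z ∈ S, dist y z ≤ δ → ‖P y - P z‖ ≤ H * dist y z ^ α) :
    holderNormOn α S (fun x => χ x • P x) ≤
      B * H + (B + L * δ ^ (1 - α) + 2 * B * δ ^ (-α)) * supNormOn S P := by
  have hT : 0 ≤ supNormOn S P := supNormOn_nonneg
  have hPT : ∀ x ∈ S, ‖P x‖ ≤ supNormOn S P := fun x hx => norm_le_supNormOn hPb hx
  have hsup : supNormOn S (fun x => χ x • P x) ≤ B * supNormOn S P :=
    supNormOn_le (by positivity) fun x hx => by
      rw [norm_smul]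
      exact mul_le_mul (hB x) (hPT x hx) (norm_nonneg _) hB₀
  have hsemi := holderSeminormOn_le (by positivity)
    (holderBoundOn_smul_of_local hα hδ hχ hB hPT hH hP)
  calc holderNormOn α S (fun x => χ x • P x)
      ≤ B * supNormOn S P +
          (B * H + (L * δ ^ (1 - α) + 2 * B * δ ^ (-α)) * supNormOn S P) := add_le_add hsup hsemi
    _ = B * H + (B + L * δ ^ (1 - α) + 2 * B * δ ^ (-α)) * supNormOn S P := by ring

lemma holderSeminormOn_le_sum_sum {ι : Type*} [Fintype ι] (G : ι → ι → X → F) (i j : ι) :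
    holderSeminormOn α S (G i j) ≤ ∑ i, ∑ j, holderSeminormOn α S (G i j) :=
  (Finset.single_le_sum (f := fun j => holderSeminormOn α S (G i j))
    (fun _ _ => holderSeminormOn_nonneg) (Finset.mem_univ j)).trans
    (Finset.single_le_sum (f := fun i => ∑ j, holderSeminormOn α S (G i j))
      (fun _ _ => Finset.sum_nonneg fun _ _ => holderSeminormOn_nonneg) (Finset.mem_univ i))

end HolderNorms

section ContDiff

variable {E F : Type*} [NormedAddCommGroup E] [NormedSpace ℝ E]
  [NormedAddCommGroup F] [NormedSpace ℝ F]

lemma exists_lipschitzOnWith_of_contDiffOn {K U : Set E} {f : E → F} (hK : IsCompact K)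
    (hU : IsOpen U) (hKU : K ⊆ U) (hf : ContDiffOn ℝ 1 f U) : ∃ L, LipschitzOnWith L f K := by
  refine LocallyLipschitzOn.exists_lipschitzOnWith_of_compact hK fun x hx => ?_
  obtain ⟨L, t, ht, hL⟩ := (hf.contDiffAt (hU.mem_nhds (hKU hx))).exists_lipschitzOnWith
  exact ⟨L, t, mem_nhdsWithin_of_mem_nhds ht, hL⟩

lemma exists_holderBoundOn_of_contDiffOn [ProperSpace E] {α : ℝ} {S U : Set E} {f : E → F}
    (hα : α ∈ Icc (0 : ℝ) 1) (hS : Bornology.IsBounded S) (hU : IsOpen U) (hSU : closure S ⊆ U)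
    (hf : ContDiffOn ℝ 1 f U) : ∃ M, 0 ≤ M ∧ HolderBoundOn α M S f := by
  obtain ⟨L, hL⟩ := exists_lipschitzOnWith_of_contDiffOn hS.isCompact_closure hU hSU hf
  exact ⟨L * diam S ^ (1 - α), by positivity,
    holderBoundOn_of_lipschitzOnWith hα hS (hL.mono subset_closure)⟩

lemma exists_contDiff_eqOn_ball [HasContDiffBump E] {n : ℕ∞} {U : Set E} {f : E → F} {y : E}
    {r R : ℝ} (hU : IsOpen U) (hr : 0 < r) (hrR : r < R) (hyU : closedBall y R ⊆ U)
    (hf : ContDiffOn ℝ n f U) : ∃ g : E → F, ContDiff ℝ n g ∧ EqOn g f (ball y r) := by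
  let θ : ContDiffBump y := ⟨r, R, hr, hrR⟩
  refine ⟨fun x => θ x • f x, contDiff_iff_contDiffAt.2 fun x => ?_, fun x hx => ?_⟩
  · by_cases hx : x ∈ U
    · exact θ.contDiffAt.smul (hf.contDiffAt (hU.mem_nhds hx))
    · have hθ : θ =ᶠ[𝓝 x] 0 :=
        notMem_tsupport_iff_eventuallyEq.1 fun h => hx (hyU (θ.tsupport_eq ▸ h))
      refine contDiffAt_const (c := (0 : F)) |>.congr_of_eventuallyEq ?_
      filter_upwards [hθ] with w hw
      simp [hw]
  · simp [θ.one_of_mem_closedBall (ball_subset_closedBall hx)]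

end ContDiff

section Dilation

variable {E F : Type*} [SeminormedAddCommGroup E] [NormedSpace ℝ E] [SeminormedAddCommGroup F]

lemma HolderBoundOn.norm_sub_smul_le {α M r R : ℝ} {s : Set E} {f : E → F} {x z : E}
    (hf : HolderBoundOn α M s f) (hM : 0 ≤ M) (hα : 0 ≤ α) (hr : 0 ≤ r)
    (hs : closedBall x (r * R) ⊆ s) (hz : z ∈ closedBall 0 R) :
    ‖f (x - r • z) - f x‖ ≤ M * (r * R) ^ α := by
  have hdist : dist (x - r • z) x ≤ r * R := by
    rw [dist_eq_norm, sub_sub_cancel_left, norm_neg, norm_smul, Real.norm_of_nonneg hr]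
    exact mul_le_mul_of_nonneg_left (mem_closedBall_zero_iff.1 hz) hr
  refine (hf _ (hs hdist) x (hs (mem_closedBall_self (dist_nonneg.trans hdist)))).trans ?_
  gcongr

end Dilation

section DirDeriv

variable {E F : Type*} [NormedAddCommGroup E] [NormedSpace ℝ E]
  [NormedAddCommGroup F] [NormedSpace ℝ F]

/-- The directional derivative `∂_v f`; `pd i` is the case of the `i`-th unit vector. -/
def dirDeriv (v : E) (f : E → F) (y : E) : F :=
  fderiv ℝ f y v

lemma contDiff_dirDeriv {m n : WithTop ℕ∞} {f : E → F} (hf : ContDiff ℝ n f) (hmn : m + 1 ≤ n)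
    (v : E) : ContDiff ℝ m (dirDeriv v f) :=
  (hf.fderiv_right hmn).clm_apply contDiff_const

lemma continuous_dirDeriv {f : E → F} (hf : ContDiff ℝ 1 f) (v : E) : Continuous (dirDeriv v f) :=
  (contDiff_dirDeriv (m := 0) hf (by simp) v).continuous

lemma support_dirDeriv_subset {f : E → F} {s : Set E} (hs : IsClosed s) (hf : support f ⊆ s)
    (v : E) : support (dirDeriv v f) ⊆ s :=
  (subset_tsupport _).trans ((tsupport_fderiv_apply_subset ℝ v).trans (closure_minimal hf hs))

lemma eqOn_dirDeriv {f g : E → F} {s : Set E} (hs : IsOpen s) (hfg : EqOn f g s) (v : E) :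
    EqOn (dirDeriv v f) (dirDeriv v g) s := fun y hy => by
  rw [dirDeriv, dirDeriv, (hfg.eventuallyEq_of_mem (hs.mem_nhds hy)).fderiv_eq]

lemma dirDeriv_comp_sub_smul {f : E → F} (hf : Differentiable ℝ f) (v x : E) (r : ℝ) (z : E) :
    dirDeriv v (fun z => f (x - r • z)) z = -r • dirDeriv v f (x - r • z) := by
  have hsub : HasFDerivAt (fun z : E => x - r • z) (-(r • ContinuousLinearMap.id ℝ E)) z :=
    ((hasFDerivAt_id z).const_smul r).const_sub x
  have hcomp : HasFDerivAt (fun z => f (x - r • z)) _ z := (hf _).hasFDerivAt.comp z hsub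
  simp [dirDeriv, hcomp.fderiv]

end DirDeriv

section CompactSupport

variable {E F : Type*} [NormedAddCommGroup E] [NormedAddCommGroup F]

lemma hasCompactSupport_of_support_subset_closedBall [ProperSpace E] {f : E → F} {R : ℝ}
    (hf : support f ⊆ closedBall 0 R) : HasCompactSupport f :=
  HasCompactSupport.of_support_subset_isCompact (isCompact_closedBall 0 R) hf

lemma exists_norm_le_and_lipschitzWith [NormedSpace ℝ E] [NormedSpace ℝ F] {f : E → F}
    (hf : ContDiff ℝ 1 f) (hfc : HasCompactSupport f) :
    ∃ L : ℝ≥0, (∀ z, ‖f z‖ ≤ L) ∧ LipschitzWith L f := by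
  obtain ⟨N, hN⟩ := hfc.exists_bound_of_continuous hf.continuous
  obtain ⟨L, hL⟩ := hf.lipschitzWith_of_hasCompactSupport hfc one_ne_zero
  exact ⟨max N.toNNReal L, fun z => (hN z).trans (by simp), hL.weaken (le_max_right _ _)⟩

lemma norm_integral_le_of_support_subset_closedBall [NormedSpace ℝ F] [ProperSpace E]
    [MeasurableSpace E] {μ : Measure E} [IsFiniteMeasureOnCompacts μ] {f : E → F} {R N : ℝ}
    (hf : support f ⊆ closedBall 0 R) (hN : ∀ z ∈ closedBall 0 R, ‖f z‖ ≤ N) :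
    ‖∫ z, f z ∂μ‖ ≤ N * μ.real (closedBall 0 R) := by
  rw [← setIntegral_eq_integral_of_forall_compl_eq_zero fun z hz => notMem_support.1 fun h =>
    hz (hf h)]
  exact norm_setIntegral_le_of_norm_le_const (isCompact_closedBall 0 R).measure_lt_top hN

end CompactSupport

section ScaledAverage

variable {E F : Type*} [NormedAddCommGroup E] [NormedSpace ℝ E] [MeasurableSpace E]
  [NormedAddCommGroup F] [NormedSpace ℝ F] {μ : Measure E} {k : E → ℝ} {f : E → F}

/-- The average of `f` at scale `r` around `x` with weight `k`. For `r > 0` it is the convolution of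
`f` with the rescaled weight `r⁻ⁿ k(·/r)`; the present form also makes sense for `r = 0`. -/
def scaledAverage (μ : Measure E) (k : E → ℝ) (f : E → F) (x : E) (r : ℝ) : F :=
  ∫ z, k z • f (x - r • z) ∂μ

lemma scaledAverage_zero [CompleteSpace F] (x : E) :
    scaledAverage μ k f x 0 = (∫ z, k z ∂μ) • f x := by
  simp [scaledAverage, integral_smul_const]

variable [BorelSpace E]

lemma scaledAverage_sub_smul [μ.IsAddRightInvariant] (x h : E) (r : ℝ) :
    scaledAverage μ k f (x - r • h) r = scaledAverage μ (fun z => k (z - h)) f x r := by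
  rw [scaledAverage, ← integral_sub_right_eq_self _ h]
  simp only [scaledAverage, smul_sub, sub_sub, add_sub_cancel]

section FiniteOnCompacts

variable [IsFiniteMeasureOnCompacts μ]

lemma integrable_smul_comp_sub_smul (hk : Continuous k) (hkc : HasCompactSupport k)
    (hf : Continuous f) (x : E) (r : ℝ) : Integrable (fun z => k z • f (x - r • z)) μ :=
  (hk.smul (hf.comp (by fun_prop))).integrable_of_hasCompactSupport hkc.smul_right

lemma scaledAverage_sub_left {k' : E → ℝ} (hk : Continuous k) (hkc : HasCompactSupport k)
    (hk' : Continuous k') (hkc' : HasCompactSupport k') (hf : Continuous f) (x : E) (r : ℝ) :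
    scaledAverage μ (k - k') f x r = scaledAverage μ k f x r - scaledAverage μ k' f x r := by
  simp only [scaledAverage, Pi.sub_apply, sub_smul]
  exact integral_sub (integrable_smul_comp_sub_smul hk hkc hf x r)
    (integrable_smul_comp_sub_smul hk' hkc' hf x r)

lemma scaledAverage_sub_const (hk : Continuous k) (hkc : HasCompactSupport k)
    (hk₀ : ∫ z, k z ∂μ = 0) (hf : Continuous f) (c : F) (x : E) (r : ℝ) :
    scaledAverage μ k (fun w => f w - c) x r = scaledAverage μ k f x r := by
  simp only [scaledAverage, smul_sub]
  rw [integral_sub (integrable_smul_comp_sub_smul hk hkc hf x r)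
    (integrable_smul_comp_sub_smul (f := fun _ => c) hk hkc continuous_const x r)]
  by_cases hF : CompleteSpace F
  · rw [integral_smul_const, hk₀, zero_smul, sub_zero]
  · simp [integral, hF]

variable [FiniteDimensional ℝ E]

lemma norm_scaledAverage_le_of_integral_eq_zero {R N L r : ℝ} {x : E} {c : F} (hk : Continuous k)
    (hkR : support k ⊆ closedBall 0 R) (hk₀ : ∫ z, k z ∂μ = 0) (hf : Continuous f)
    (hN : ∀ z, ‖k z‖ ≤ N) (hL : ∀ z ∈ closedBall (0 : E) R, ‖f (x - r • z) - c‖ ≤ L) :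
    ‖scaledAverage μ k f x r‖ ≤ N * L * μ.real (closedBall 0 R) := by
  rw [← scaledAverage_sub_const hk (hasCompactSupport_of_support_subset_closedBall hkR) hk₀ hf c]
  refine norm_integral_le_of_support_subset_closedBall
    ((support_smul_subset_left _ _).trans hkR) fun z hz => ?_
  rw [norm_smul]
  gcongr
  · exact (norm_nonneg _).trans (hN z)
  · exact hN z
  · exact hL z hz

-- The difference of a kernel and its translate has integral zero, whether or not the kernel does.
lemma norm_scaledAverage_sub_le [μ.IsAddRightInvariant] {N : ℝ≥0} {L r : ℝ} {x y : E} {c : F}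
    (hk : LipschitzWith N k) (hk₁ : support k ⊆ closedBall 0 1) (hf : Continuous f) (hr : 0 < r)
    (hxy : dist x y ≤ r) (hL : ∀ z ∈ closedBall (0 : E) 2, ‖f (x - r • z) - c‖ ≤ L) :
    ‖scaledAverage μ k f x r - scaledAverage μ k f y r‖ ≤
      N * (dist x y / r) * L * μ.real (closedBall 0 2) := by
  set h : E := r⁻¹ • (x - y) with hh
  have hnorm : ‖h‖ = dist x y / r := by
    rw [hh, norm_smul, norm_inv, Real.norm_of_nonneg hr.le, dist_eq_norm, inv_mul_eq_div]
  have hy : x - r • h = y := by rw [hh, smul_inv_smul₀ hr.ne', sub_sub_cancel]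
  have hk' : Continuous fun z => k (z - h) := hk.continuous.comp (by fun_prop)
  have hkc := hasCompactSupport_of_support_subset_closedBall hk₁
  have hsupp' : support (fun z => k (z - h)) ⊆ closedBall 0 2 := fun z hz => by
    have h₁ : ‖z - h‖ ≤ 1 := mem_closedBall_zero_iff.1 (hk₁ hz)
    have h₂ : ‖h‖ ≤ 1 := hnorm ▸ (div_le_one hr).2 hxy
    exact mem_closedBall_zero_iff.2 (by linarith [norm_le_norm_sub_add z h])
  rw [← hy, scaledAverage_sub_smul, hy, ← scaledAverage_sub_left hk.continuous hkc hk'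
    (hasCompactSupport_of_support_subset_closedBall hsupp') hf, ← hnorm]
  refine norm_scaledAverage_le_of_integral_eq_zero (hk.continuous.sub hk')
    ((support_sub _ _).trans (union_subset (hk₁.trans (closedBall_subset_closedBall one_le_two))
      hsupp')) ?_ hf (fun z => ?_) hL
  · simp only [Pi.sub_apply]
    rw [integral_sub (hk.continuous.integrable_of_hasCompactSupport hkc)
      (hk'.integrable_of_hasCompactSupport (hasCompactSupport_of_support_subset_closedBall hsupp')),
      integral_sub_right_eq_self k h, sub_self]
  · simpa [dist_eq_norm] using hk.dist_le_mul z (z - h)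

-- On a bounded range of scales, `x - r • z` stays in a compact set for `z` in the support of `k`.
lemma hasDerivAt_scaledAverage {R : ℝ} (hk : Continuous k) (hkR : support k ⊆ closedBall 0 R)
    (hf : ContDiff ℝ 1 f) (x : E) (r : ℝ) :
    HasDerivAt (scaledAverage μ k f x) (-∫ z, k z • dirDeriv z f (x - r • z) ∂μ) r := by
  have hkc := hasCompactSupport_of_support_subset_closedBall hkR
  have hderiv : Continuous fun p : ℝ × E => fderiv ℝ f (x - p.1 • p.2) (-p.2) :=
    ((hf.continuous_fderiv one_ne_zero).comp (by fun_prop)).clm_apply (by fun_prop)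
  obtain ⟨B, hB⟩ := ((isCompact_closedBall r 1).prod
    (isCompact_closedBall (0 : E) R)).exists_bound_of_continuousOn hderiv.continuousOn
  have hmain := (hasDerivAt_integral_of_dominated_loc_of_deriv_le (μ := μ) (x₀ := r)
    (F := fun t z => k z • f (x - t • z))
    (F' := fun t z => k z • fderiv ℝ f (x - t • z) (-z)) (bound := fun z => ‖k z‖ * B)
    (closedBall_mem_nhds r one_pos)
    (.of_forall fun t => (integrable_smul_comp_sub_smul hk hkc hf.continuous x t).1)
    (integrable_smul_comp_sub_smul hk hkc hf.continuous x r)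
    (hk.smul (hderiv.comp (Continuous.prodMk_right r))).aestronglyMeasurable ?_
    ((hk.integrable_of_hasCompactSupport hkc).norm.mul_const B) ?_).2
  · simp only [map_neg, smul_neg, integral_neg] at hmain
    exact hmain
  · refine .of_forall fun z t ht => ?_
    rw [norm_smul]
    by_cases hz : k z = 0
    · simp [hz]
    · gcongr
      exact hB (t, z) ⟨ht, hkR hz⟩
  · refine .of_forall fun z t _ => HasDerivAt.const_smul _ ?_
    have hline : HasDerivAt (fun t : ℝ => x - t • z) (-z) t := by
      simpa using ((hasDerivAt_id t).smul_const z).const_sub x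
    exact (hf.differentiable one_ne_zero _).hasFDerivAt.comp_hasDerivAt t hline

end FiniteOnCompacts

section Haar

variable [FiniteDimensional ℝ E] [μ.IsAddHaarMeasure]

lemma scaledAverage_dirDeriv_left (hk : ContDiff ℝ 1 k)
    (hkc : HasCompactSupport k) (hf : ContDiff ℝ 1 f) (v x : E) (r : ℝ) :
    scaledAverage μ (dirDeriv v k) f x r = r • scaledAverage μ k (dirDeriv v f) x r := by
  have hfd : Differentiable ℝ f := hf.differentiable one_ne_zero
  have hscale (z : E) : k z • fderiv ℝ (fun z => f (x - r • z)) z v =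
      -r • k z • dirDeriv v f (x - r • z) := by
    rw [smul_comm (-r), ← dirDeriv_comp_sub_smul hfd, dirDeriv]
  have hparts := integral_smul_fderiv_eq_neg_fderiv_smul_of_integrable (μ := μ) (f := k)
    (g := fun z => f (x - r • z)) (v := v)
    (integrable_smul_comp_sub_smul (continuous_dirDeriv hk v) (hkc.fderiv_apply ℝ v) hf.continuous
      x r) ?_ (integrable_smul_comp_sub_smul hk.continuous hkc hf.continuous x r)
    (fun z _ => hk.differentiable one_ne_zero z) (fun z _ => ?_)
  · rw [scaledAverage, ← neg_neg (∫ _, _ ∂μ)]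
    refine (congrArg Neg.neg hparts).symm.trans ?_
    simp_rw [hscale, integral_smul, neg_smul, neg_neg]
    rfl
  · simp_rw [hscale]
    exact (integrable_smul_comp_sub_smul hk.continuous hkc (continuous_dirDeriv hf v) x r).smul _
  · exact (hfd.comp (by fun_prop : Differentiable ℝ fun z : E => x - r • z)) z

lemma integral_dirDeriv_eq_zero (hk : ContDiff ℝ 1 k)
    (hkc : HasCompactSupport k) (v : E) : ∫ z, dirDeriv v k z ∂μ = 0 := by
  simpa [scaledAverage] using
    scaledAverage_dirDeriv_left (μ := μ) hk hkc (contDiff_const (c := (1 : ℝ))) v 0 0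

end Haar

end ScaledAverage

section RadialKernel

/-- The smooth profile of `radialWeight` as a function of the squared norm; zero on `[1, ∞)`. -/
def weightProfile (t : ℝ) : ℝ :=
  Real.smoothTransition (1 - t)

/-- Half the primitive of `weightProfile` that vanishes on `[1, ∞)`. -/
def potentialProfile (t : ℝ) : ℝ :=
  ∫ s in (1 : ℝ)..t, weightProfile s / 2

lemma contDiff_weightProfile {n : ℕ∞} : ContDiff ℝ n weightProfile :=
  Real.smoothTransition.contDiff.comp (contDiff_const.sub contDiff_id)

lemma weightProfile_eq_zero {t : ℝ} (ht : 1 ≤ t) : weightProfile t = 0 :=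
  Real.smoothTransition.zero_of_nonpos (sub_nonpos.2 ht)

lemma hasDerivAt_potentialProfile (t : ℝ) :
    HasDerivAt potentialProfile (weightProfile t / 2) t :=
  ((contDiff_weightProfile (n := 0)).continuous.div_const 2).integral_hasStrictDerivAt 1 t
    |>.hasDerivAt

lemma contDiff_potentialProfile {n : ℕ∞} : ContDiff ℝ n potentialProfile := by
  have hderiv : deriv potentialProfile = fun t => weightProfile t / 2 :=
    funext fun t => (hasDerivAt_potentialProfile t).deriv
  refine (contDiff_infty_iff_deriv.2 ⟨fun t => (hasDerivAt_potentialProfile t).differentiableAt, ?_⟩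
    : ContDiff ℝ (⊤ : ℕ∞) potentialProfile).of_le (mod_cast le_top)
  exact hderiv ▸ contDiff_weightProfile.div_const 2

lemma potentialProfile_eq_zero {t : ℝ} (ht : 1 ≤ t) : potentialProfile t = 0 := by
  refine intervalIntegral.integral_zero_ae (.of_forall fun s hs => ?_)
  rw [uIoc_of_le ht] at hs
  rw [weightProfile_eq_zero hs.1.le, zero_div]

variable {E : Type*} [NormedAddCommGroup E]

/-- A smooth nonnegative radial weight supported in the unit ball. -/
def radialWeight (z : E) : ℝ :=
  weightProfile (‖z‖ ^ 2)

/-- A smooth potential supported in the unit ball, with gradient `radialWeight z • z`. -/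
def radialPotential (z : E) : ℝ :=
  potentialProfile (‖z‖ ^ 2)

lemma support_comp_norm_sq_subset {q : ℝ → ℝ} (hq : ∀ t, 1 ≤ t → q t = 0) :
    support (fun z : E => q (‖z‖ ^ 2)) ⊆ closedBall 0 1 := fun z hz => by
  rw [mem_closedBall_zero_iff]
  by_contra! h
  exact hz (hq _ (one_le_pow₀ h.le))

lemma support_radialWeight_subset : support (radialWeight : E → ℝ) ⊆ closedBall 0 1 :=
  support_comp_norm_sq_subset fun _ => weightProfile_eq_zero

lemma support_radialPotential_subset : support (radialPotential : E → ℝ) ⊆ closedBall 0 1 :=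
  support_comp_norm_sq_subset fun _ => potentialProfile_eq_zero

variable [InnerProductSpace ℝ E]

lemma contDiff_radialWeight {n : ℕ∞} : ContDiff ℝ n (radialWeight : E → ℝ) :=
  contDiff_weightProfile.comp (contDiff_norm_sq ℝ)

lemma contDiff_radialPotential {n : ℕ∞} : ContDiff ℝ n (radialPotential : E → ℝ) :=
  contDiff_potentialProfile.comp (contDiff_norm_sq ℝ)

lemma dirDeriv_radialPotential (v z : E) :
    dirDeriv v radialPotential z = radialWeight z * ⟪z, v⟫ := by
  have h : HasFDerivAt (radialPotential : E → ℝ) ((radialWeight z / 2) • 2 • innerSL ℝ z) z :=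
    (hasDerivAt_potentialProfile _).comp_hasFDerivAt z (hasStrictFDerivAt_norm_sq z).hasFDerivAt
  have hhalf : (radialWeight z / 2) • 2 • innerSL ℝ z = radialWeight z • innerSL ℝ z := by module
  rw [dirDeriv, h.fderiv, hhalf]
  rfl

lemma integral_radialWeight_pos [FiniteDimensional ℝ E] [MeasurableSpace E] [BorelSpace E]
    (μ : Measure E) [μ.IsAddHaarMeasure] : 0 < ∫ z, radialWeight z ∂μ := by
  have hcont : Continuous (radialWeight : E → ℝ) := (contDiff_radialWeight (n := 0)).continuous
  refine hcont.integral_pos_of_hasCompactSupport_nonneg_nonzero (x := 0)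
    (hasCompactSupport_of_support_subset_closedBall support_radialWeight_subset)
    (fun z => Real.smoothTransition.nonneg _) ?_
  simp [radialWeight, weightProfile]

end RadialKernel

section HessianAverage

variable {ι E F : Type*} [NormedAddCommGroup E] [InnerProductSpace ℝ E]
  [NormedAddCommGroup F] [NormedSpace ℝ F]

/-- The second derivative `∂_w ∂_v Ψ` of the radial potential `Ψ`. -/
def radialHessian (v w : E) : E → ℝ :=
  dirDeriv w (dirDeriv v radialPotential)

lemma contDiff_dirDeriv_radialPotential {n : ℕ∞} (v : E) :
    ContDiff ℝ n (dirDeriv v (radialPotential : E → ℝ)) :=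
  contDiff_dirDeriv (n := (n + 1 : ℕ∞)) contDiff_radialPotential (by simp) v

lemma contDiff_radialHessian {n : ℕ∞} (v w : E) : ContDiff ℝ n (radialHessian v w) :=
  contDiff_dirDeriv (n := (n + 1 : ℕ∞)) (contDiff_dirDeriv_radialPotential v) (by simp) w

lemma support_dirDeriv_radialPotential_subset (v : E) :
    support (dirDeriv v (radialPotential : E → ℝ)) ⊆ closedBall 0 1 :=
  support_dirDeriv_subset isClosed_closedBall support_radialPotential_subset v

lemma support_radialHessian_subset (v w : E) : support (radialHessian v w) ⊆ closedBall 0 1 :=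
  support_dirDeriv_subset isClosed_closedBall (support_dirDeriv_radialPotential_subset v) w

variable [Fintype ι]

lemma norm_sum_sum_le_card_sq_mul {V : Type*} [SeminormedAddCommGroup V] {a : ι → ι → V} {B : ℝ}
    (h : ∀ i j, ‖a i j‖ ≤ B) : ‖∑ i, ∑ j, a i j‖ ≤ Fintype.card ι ^ 2 * B := by
  refine (norm_sum_le_of_le _ fun i _ => norm_sum_le_of_le _ fun j _ => h i j).trans_eq ?_
  simp only [Finset.sum_const, Finset.card_univ, nsmul_eq_mul]
  ring

/-- `P` solves `-ΔP = ∑ᵢⱼ ∂ᵢ∂ⱼ Gᵢⱼ` on `s`, with derivatives along an orthonormal basis. -/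
def SolvesDivDivOn (b : OrthonormalBasis ι ℝ E) (P : E → F) (G : ι → ι → E → F) (s : Set E) :
    Prop :=
  ∀ y ∈ s, -∑ i, dirDeriv (b i) (dirDeriv (b i) P) y =
    ∑ i, ∑ j, dirDeriv (b i) (dirDeriv (b j) (G i j)) y

lemma SolvesDivDivOn.congr {b : OrthonormalBasis ι ℝ E} {P P' : E → F} {G G' : ι → ι → E → F}
    {s : Set E} (h : SolvesDivDivOn b P G s) (hs : IsOpen s) (hP : EqOn P' P s)
    (hG : ∀ i j, EqOn (G' i j) (G i j) s) : SolvesDivDivOn b P' G' s := fun y hy => by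
  simp_rw [fun i => eqOn_dirDeriv hs (eqOn_dirDeriv hs hP (b i)) (b i) hy,
    fun i j => eqOn_dirDeriv hs (eqOn_dirDeriv hs (hG i j) (b j)) (b i) hy]
  exact h y hy

lemma dirDeriv_eq_sum_inner_smul (b : OrthonormalBasis ι ℝ E) (v : E) (f : E → F) (y : E) :
    dirDeriv v f y = ∑ i, ⟪b i, v⟫ • dirDeriv (b i) f y := by
  conv_lhs => rw [dirDeriv, ← b.sum_repr' v, map_sum]
  simp only [map_smul, dirDeriv]

lemma exists_radialHessian_norm_le_and_lipschitzWith [FiniteDimensional ℝ E]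
    (b : OrthonormalBasis ι ℝ E) :
    ∃ L : ℝ≥0, ∀ i j, (∀ z, ‖radialHessian (b i) (b j) z‖ ≤ L) ∧
      LipschitzWith L (radialHessian (b i) (b j)) := by
  choose l hl hlip using fun p : ι × ι => exists_norm_le_and_lipschitzWith
    (contDiff_radialHessian (n := 1) (b p.1) (b p.2))
    (hasCompactSupport_of_support_subset_closedBall (support_radialHessian_subset (b p.1) (b p.2)))
  obtain ⟨L, hL⟩ := Finite.exists_le l
  exact ⟨L, fun i j => ⟨fun z => (hl (i, j) z).trans (mod_cast hL (i, j)),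
    (hlip (i, j)).weaken (hL (i, j))⟩⟩

variable [MeasurableSpace E] {b : OrthonormalBasis ι ℝ E} {μ : Measure E}
  {P f : E → F} {G : ι → ι → E → F} {s : Set E} {α M r : ℝ} {L : ℝ≥0} {x y : E}

/-- The average of the matrix field `G` at scale `r` around `x` against the Hessian of the radial
potential. -/
def hessianAverage (b : OrthonormalBasis ι ℝ E) (μ : Measure E) (G : ι → ι → E → F) (x : E)
    (r : ℝ) : F :=
  ∑ i, ∑ j, scaledAverage μ (radialHessian (b i) (b j)) (G i j) x r

variable [BorelSpace E] [FiniteDimensional ℝ E] [μ.IsAddHaarMeasure]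

lemma scaledAverage_radialHessian (hf : ContDiff ℝ 2 f) (v w x : E) (r : ℝ) :
    scaledAverage μ (radialHessian v w) f x r =
      r • r • scaledAverage μ radialPotential (dirDeriv v (dirDeriv w f)) x r := by
  rw [radialHessian, scaledAverage_dirDeriv_left (contDiff_dirDeriv_radialPotential (n := 1) v)
      (hasCompactSupport_of_support_subset_closedBall (support_dirDeriv_radialPotential_subset v))
      (hf.of_le one_le_two),
    scaledAverage_dirDeriv_left (contDiff_radialPotential (n := 1))
      (hasCompactSupport_of_support_subset_closedBall support_radialPotential_subset)
      (contDiff_dirDeriv hf one_add_one_eq_two.le w)]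

lemma integral_radialWeight_smul_dirDeriv (b : OrthonormalBasis ι ℝ E) (hP : ContDiff ℝ 2 P)
    (x : E) (r : ℝ) : ∫ z, radialWeight z • dirDeriv z P (x - r • z) ∂μ =
      r • ∑ i, scaledAverage μ radialPotential (dirDeriv (b i) (dirDeriv (b i) P)) x r := by
  have hexpand (z : E) : radialWeight z • dirDeriv z P (x - r • z) =
      ∑ i, dirDeriv (b i) radialPotential z • dirDeriv (b i) P (x - r • z) := by
    simp only [dirDeriv_eq_sum_inner_smul b z P, Finset.smul_sum, smul_smul,
      dirDeriv_radialPotential, real_inner_comm (b _) z]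
  have hP' (i : ι) : ContDiff ℝ 1 (dirDeriv (b i) P) :=
    contDiff_dirDeriv hP one_add_one_eq_two.le (b i)
  simp_rw [hexpand]
  rw [integral_finsetSum, Finset.smul_sum]
  · exact Finset.sum_congr rfl fun i _ =>
      scaledAverage_dirDeriv_left (contDiff_radialPotential (n := 1))
        (hasCompactSupport_of_support_subset_closedBall support_radialPotential_subset)
        (hP' i) (b i) x r
  · exact fun i _ => integrable_smul_comp_sub_smul
      (contDiff_dirDeriv_radialPotential (n := 0) (b i)).continuous
      (hasCompactSupport_of_support_subset_closedBall
        (support_dirDeriv_radialPotential_subset (b i))) (hP' i).continuous x r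

lemma SolvesDivDivOn.neg_sum_scaledAverage_eq (h : SolvesDivDivOn b P G s) (hP : ContDiff ℝ 2 P)
    (hG : ∀ i j, ContDiff ℝ 2 (G i j)) {k : E → ℝ} (hk : Continuous k)
    (hk₁ : support k ⊆ closedBall 0 1) (hs : closedBall x |r| ⊆ s) :
    -∑ i, scaledAverage μ k (dirDeriv (b i) (dirDeriv (b i) P)) x r =
      ∑ i, ∑ j, scaledAverage μ k (dirDeriv (b i) (dirDeriv (b j) (G i j))) x r := by
  have hint {f : E → F} (hf : ContDiff ℝ 2 f) (i j : ι) :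
      Integrable (fun z => k z • dirDeriv (b i) (dirDeriv (b j) f) (x - r • z)) μ :=
    integrable_smul_comp_sub_smul hk (hasCompactSupport_of_support_subset_closedBall hk₁)
      (continuous_dirDeriv (contDiff_dirDeriv hf one_add_one_eq_two.le (b j)) (b i)) x r
  simp only [scaledAverage]
  rw [← integral_finsetSum _ fun i _ => hint hP i i, ← integral_neg]
  simp_rw [← integral_finsetSum _ fun j _ => hint (hG _ j) _ j]
  rw [← integral_finsetSum _ fun i _ => integrable_finsetSum _ fun j _ => hint (hG i j) i j]
  refine integral_congr_ae (.of_forall fun z => ?_)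
  simp only [← Finset.smul_sum, ← smul_neg]
  by_cases hz : k z = 0
  · simp [hz]
  · rw [h _ (hs ?_)]
    rw [mem_closedBall, dist_eq_norm, sub_sub_cancel_left, norm_neg, norm_smul, Real.norm_eq_abs]
    exact mul_le_of_le_one_right (abs_nonneg r) (mem_closedBall_zero_iff.1 (hk₁ hz))

/-- Differentiating in the scale turns `ΔP`, through the equation and two integrations by parts,
into a kernel of mean zero acting on `G` itself. -/
lemma SolvesDivDivOn.hasDerivAt_scaledAverage_radialWeight (h : SolvesDivDivOn b P G s)
    (hP : ContDiff ℝ 2 P) (hG : ∀ i j, ContDiff ℝ 2 (G i j)) (hs : closedBall x |r| ⊆ s)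
    (hr : r ≠ 0) :
    HasDerivAt (scaledAverage μ radialWeight P x) (r⁻¹ • hessianAverage b μ G x r) r := by
  convert hasDerivAt_scaledAverage (μ := μ) (contDiff_radialWeight (n := 0)).continuous
    support_radialWeight_subset (hP.of_le one_le_two) x r using 1
  rw [integral_radialWeight_smul_dirDeriv b hP, ← smul_neg,
    h.neg_sum_scaledAverage_eq hP hG (contDiff_radialPotential (n := 0)).continuous
      support_radialPotential_subset hs]
  simp_rw [hessianAverage, scaledAverage_radialHessian (hG _ _), ← Finset.smul_sum,
    inv_smul_smul₀ hr]

lemma norm_hessianAverage_le (hL : ∀ i j z, ‖radialHessian (b i) (b j) z‖ ≤ L)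
    (hG : ∀ i j, Continuous (G i j)) (hGα : ∀ i j, HolderBoundOn α M s (G i j)) (hM : 0 ≤ M)
    (hα : 0 ≤ α) (hr : 0 ≤ r) (hs : closedBall x r ⊆ s) :
    ‖hessianAverage b μ G x r‖ ≤
      Fintype.card ι ^ 2 * (L * (M * r ^ α) * μ.real (closedBall 0 1)) := by
  refine norm_sum_sum_le_card_sq_mul fun i j => ?_
  have hmean : ∫ z, radialHessian (b i) (b j) z ∂μ = 0 :=
    integral_dirDeriv_eq_zero (contDiff_dirDeriv_radialPotential (n := 1) (b i))
      (hasCompactSupport_of_support_subset_closedBall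
        (support_dirDeriv_radialPotential_subset (b i))) (b j)
  refine norm_scaledAverage_le_of_integral_eq_zero (c := G i j x)
    (contDiff_radialHessian (n := 0) _ _).continuous (support_radialHessian_subset _ _) hmean
    (hG i j) (hL i j) fun z hz => ?_
  simpa only [mul_one] using (hGα i j).norm_sub_smul_le hM hα hr (by rwa [mul_one]) hz

lemma norm_hessianAverage_sub_le (hL : ∀ i j, LipschitzWith L (radialHessian (b i) (b j)))
    (hG : ∀ i j, Continuous (G i j)) (hGα : ∀ i j, HolderBoundOn α M s (G i j)) (hM : 0 ≤ M)
    (hα : 0 ≤ α) (hr : 0 < r) (hs : closedBall x (r * 2) ⊆ s) (hxy : dist x y ≤ r) :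
    ‖hessianAverage b μ G x r - hessianAverage b μ G y r‖ ≤
      Fintype.card ι ^ 2 *
        (L * (dist x y / r) * (M * (r * 2) ^ α) * μ.real (closedBall 0 2)) := by
  simp_rw [hessianAverage, ← Finset.sum_sub_distrib]
  exact norm_sum_sum_le_card_sq_mul fun i j =>
    norm_scaledAverage_sub_le (hL i j) (support_radialHessian_subset _ _) (hG i j) hr hxy
      fun z hz => (hGα i j).norm_sub_smul_le hM hα hr.le hs hz

end HessianAverage

section PowerDerivative

variable {F : Type*} [NormedAddCommGroup F] [NormedSpace ℝ F] {A A' : ℝ → F} {β K s t : ℝ}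

lemma norm_sub_le_of_norm_deriv_le_rpow (hβ : β ≠ 0) (hs : 0 < s) (hst : s ≤ t)
    (hA : ∀ r ∈ Icc s t, HasDerivAt A (A' r) r)
    (hA' : ∀ r ∈ Icc s t, ‖A' r‖ ≤ K * r ^ (β - 1)) :
    ‖A t - A s‖ ≤ K / β * (t ^ β - s ^ β) := by
  have hpow : ∀ r ∈ Icc s t,
      HasDerivAt (fun r => K / β * (r ^ β - s ^ β)) (K * r ^ (β - 1)) r := fun r hr => by
    have := ((Real.hasDerivAt_rpow_const (p := β) (.inl (hs.trans_le hr.1).ne')).sub_const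
      (s ^ β)).const_mul (K / β)
    rwa [← mul_assoc, div_mul_cancel₀ _ hβ] at this
  exact image_norm_le_of_norm_deriv_right_le_deriv_boundary'
    (f := fun r => A r - A s) (B := fun r => K / β * (r ^ β - s ^ β))
    (fun r hr => ((hA r hr).sub_const _).continuousAt.continuousWithinAt)
    (fun r hr => ((hA r (Ico_subset_Icc_self hr)).sub_const _).hasDerivWithinAt) (by simp)
    (fun r hr => (hpow r hr).continuousAt.continuousWithinAt)
    (fun r hr => (hpow r (Ico_subset_Icc_self hr)).hasDerivWithinAt)
    (fun r hr => hA' r (Ico_subset_Icc_self hr)) (right_mem_Icc.2 hst)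

lemma norm_sub_zero_le_of_norm_deriv_le_rpow (hβ : 0 < β) (ht : 0 ≤ t) (hA₀ : ContinuousAt A 0)
    (hA : ∀ r ∈ Ioc 0 t, HasDerivAt A (A' r) r)
    (hA' : ∀ r ∈ Ioc 0 t, ‖A' r‖ ≤ K * r ^ (β - 1)) :
    ‖A t - A 0‖ ≤ K / β * t ^ β := by
  rcases ht.eq_or_lt with rfl | ht
  · simp [Real.zero_rpow hβ.ne']
  have hlim : Tendsto (fun s => K / β * (t ^ β - s ^ β)) (𝓝[>] 0) (𝓝 (K / β * t ^ β)) := by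
    have := (Real.continuousAt_rpow_const 0 β (.inr hβ.le)).tendsto.mono_left
      (nhdsWithin_le_nhds (s := Ioi 0))
    simpa [Real.zero_rpow hβ.ne'] using (this.const_sub (t ^ β)).const_mul (K / β)
  refine le_of_tendsto_of_tendsto
    ((hA₀.tendsto.mono_left nhdsWithin_le_nhds).const_sub (A t)).norm hlim ?_
  filter_upwards [Ioc_mem_nhdsGT ht] with s hs
  have hsub : Icc s t ⊆ Ioc 0 t := fun r hr => ⟨hs.1.trans_le hr.1, hr.2⟩
  exact norm_sub_le_of_norm_deriv_le_rpow hβ.ne' hs.1 hs.2 (fun r hr => hA r (hsub hr))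
    fun r hr => hA' r (hsub hr)

lemma norm_sub_le_of_norm_deriv_le_rpow_sub_two {α : ℝ} (hα : α < 1) (hK : 0 ≤ K) (hs : 0 < s)
    (hst : s ≤ t) (hA : ∀ r ∈ Icc s t, HasDerivAt A (A' r) r)
    (hA' : ∀ r ∈ Icc s t, ‖A' r‖ ≤ K * s * r ^ (α - 2)) :
    ‖A t - A s‖ ≤ K / (1 - α) * s ^ α := by
  have : 0 < 1 - α := sub_pos.2 hα
  calc ‖A t - A s‖ ≤ K * s / (α - 1) * (t ^ (α - 1) - s ^ (α - 1)) :=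
        norm_sub_le_of_norm_deriv_le_rpow (by linarith) hs hst hA fun r hr => by
          convert hA' r hr using 3
          ring
    _ = K / (1 - α) * (s * s ^ (α - 1) - s * t ^ (α - 1)) := by
        rw [← neg_sub 1 α, div_neg]
        ring
    _ ≤ K / (1 - α) * s ^ α := by
        have ht : 0 ≤ s * t ^ (α - 1) := by have := hs.trans_le hst; positivity
        have hs' : s * s ^ (α - 1) = s ^ α := by
          rw [Real.rpow_sub_one hs.ne', mul_div_cancel₀ _ hs.ne']
        gcongr
        linarith

end PowerDerivative

section LocalEstimate

variable {ι E F : Type*} [Fintype ι] [NormedAddCommGroup E] [InnerProductSpace ℝ E]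
  [FiniteDimensional ℝ E] [NormedAddCommGroup F] [NormedSpace ℝ F]

section ScaleDecomposition

variable [MeasurableSpace E] [BorelSpace E] {μ : Measure E} [μ.IsAddHaarMeasure]
  {b : OrthonormalBasis ι ℝ E} {P : E → F} {G : ι → ι → E → F} {s : Set E} {α δ M r T : ℝ}
  {L N : ℝ≥0} {x y : E}

lemma norm_scaledAverage_radialWeight_sub_zero_le (h : SolvesDivDivOn b P G s)
    (hP : ContDiff ℝ 2 P) (hG : ∀ i j, ContDiff ℝ 2 (G i j))
    (hL : ∀ i j z, ‖radialHessian (b i) (b j) z‖ ≤ L)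
    (hGα : ∀ i j, HolderBoundOn α M s (G i j)) (hM : 0 ≤ M) (hα : 0 < α) (hr : 0 ≤ r)
    (hs : closedBall x r ⊆ s) :
    ‖scaledAverage μ radialWeight P x r - scaledAverage μ radialWeight P x 0‖ ≤
      Fintype.card ι ^ 2 * (L * M * μ.real (closedBall 0 1)) / α * r ^ α := by
  have hsub {t : ℝ} (ht : t ∈ Ioc 0 r) : closedBall x t ⊆ s :=
    (closedBall_subset_closedBall ht.2).trans hs
  refine norm_sub_zero_le_of_norm_deriv_le_rpow hα hr
    (hasDerivAt_scaledAverage (contDiff_radialWeight (n := 0)).continuous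
      support_radialWeight_subset (hP.of_le one_le_two) x 0).continuousAt
    (fun t ht => h.hasDerivAt_scaledAverage_radialWeight hP hG
      (by rw [abs_of_pos ht.1]; exact hsub ht) ht.1.ne') fun t ht => ?_
  rw [norm_smul, norm_inv, Real.norm_of_nonneg ht.1.le]
  calc t⁻¹ * ‖hessianAverage b μ G x t‖
      ≤ t⁻¹ * (Fintype.card ι ^ 2 * (L * (M * t ^ α) * μ.real (closedBall 0 1))) := by
        have ht₀ : 0 < t := ht.1
        gcongr
        exact norm_hessianAverage_le hL (fun i j => (hG i j).continuous) hGα hM hα.le ht.1.le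
          (hsub ht)
    _ = Fintype.card ι ^ 2 * (L * M * μ.real (closedBall 0 1)) * t ^ (α - 1) := by
        rw [Real.rpow_sub_one ht.1.ne']
        ring

lemma norm_scaledAverage_radialWeight_sub_sub_le (h : SolvesDivDivOn b P G s)
    (hP : ContDiff ℝ 2 P) (hG : ∀ i j, ContDiff ℝ 2 (G i j))
    (hL : ∀ i j, LipschitzWith L (radialHessian (b i) (b j)))
    (hGα : ∀ i j, HolderBoundOn α M s (G i j)) (hM : 0 ≤ M) (hα : α ∈ Ico 0 1) (hxy : x ≠ y)
    (hδ : dist x y ≤ δ) (hs : closedBall x (δ * 2) ⊆ s) :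
    ‖(scaledAverage μ radialWeight P x δ - scaledAverage μ radialWeight P y δ) -
        (scaledAverage μ radialWeight P x (dist x y) - scaledAverage μ radialWeight P y (dist x y))‖
      ≤ Fintype.card ι ^ 2 * (L * (M * 2 ^ α) * μ.real (closedBall 0 2)) / (1 - α) *
        dist x y ^ α := by
  have hd : 0 < dist x y := dist_pos.2 hxy
  have hsub {t : ℝ} (ht : t ∈ Icc (dist x y) δ) : closedBall x (t * 2) ⊆ s :=
    (closedBall_subset_closedBall (by linarith [ht.2])).trans hs
  refine norm_sub_le_of_norm_deriv_le_rpow_sub_two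
    (A := fun t => scaledAverage μ radialWeight P x t - scaledAverage μ radialWeight P y t)
    (A' := fun t => t⁻¹ • hessianAverage b μ G x t - t⁻¹ • hessianAverage b μ G y t)
    hα.2 (by positivity) hd hδ (fun t ht => ?_) fun t ht => ?_
  · have ht₀ : 0 < t := hd.trans_le ht.1
    refine (h.hasDerivAt_scaledAverage_radialWeight hP hG ?_ ht₀.ne').sub
      (h.hasDerivAt_scaledAverage_radialWeight hP hG ?_ ht₀.ne') <;>
      rw [abs_of_pos ht₀] <;> refine (closedBall_subset_closedBall' ?_).trans (hsub ht)
    · rw [dist_self]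
      linarith
    · rw [dist_comm]
      linarith [ht.1]
  · have ht₀ : 0 < t := hd.trans_le ht.1
    rw [← smul_sub, norm_smul, norm_inv, Real.norm_of_nonneg ht₀.le]
    calc t⁻¹ * ‖hessianAverage b μ G x t - hessianAverage b μ G y t‖
        ≤ t⁻¹ * (Fintype.card ι ^ 2 *
            (L * (dist x y / t) * (M * (t * 2) ^ α) * μ.real (closedBall 0 2))) := by
          gcongr
          exact norm_hessianAverage_sub_le hL (fun i j => (hG i j).continuous) hGα hM hα.1 ht₀
            (hsub ht) ht.1
      _ = Fintype.card ι ^ 2 * (L * (M * 2 ^ α) * μ.real (closedBall 0 2)) * dist x y *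
            t ^ (α - 2) := by
          rw [Real.mul_rpow ht₀.le zero_le_two, Real.rpow_sub ht₀, Real.rpow_two]
          ring

lemma norm_scaledAverage_radialWeight_sub_le (hN : LipschitzWith N (radialWeight : E → ℝ))
    (hP : Continuous P) (hPT : ∀ w ∈ s, ‖P w‖ ≤ T) (hT : 0 ≤ T) (hα : α ∈ Icc 0 1) (hδ₀ : 0 < δ)
    (hδ : dist x y ≤ δ) (hs : closedBall x (δ * 2) ⊆ s) :
    ‖scaledAverage μ radialWeight P x δ - scaledAverage μ radialWeight P y δ‖ ≤
      N * (δ ^ (1 - α) / δ) * μ.real (closedBall 0 2) * T * dist x y ^ α := by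
  calc ‖scaledAverage μ radialWeight P x δ - scaledAverage μ radialWeight P y δ‖
      ≤ N * (dist x y / δ) * T * μ.real (closedBall 0 2) := by
        refine norm_scaledAverage_sub_le (c := 0) hN support_radialWeight_subset hP hδ₀ hδ
          fun z hz => ?_
        rw [sub_zero]
        refine hPT _ (hs ?_)
        rw [mem_closedBall, dist_eq_norm, sub_sub_cancel_left, norm_neg, norm_smul,
          Real.norm_of_nonneg hδ₀.le]
        exact mul_le_mul_of_nonneg_left (mem_closedBall_zero_iff.1 hz) hδ₀.le
    _ ≤ N * (δ ^ (1 - α) * dist x y ^ α / δ) * T * μ.real (closedBall 0 2) := by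
        gcongr
        exact le_rpow_one_sub_mul_rpow hα dist_nonneg hδ
    _ = N * (δ ^ (1 - α) / δ) * μ.real (closedBall 0 2) * T * dist x y ^ α := by ring

lemma norm_sub_le_of_norm_sub_sub_le {V : Type*} [SeminormedAddCommGroup V]
    {u₀ u₁ u₂ v₀ v₁ v₂ : V} {B₁ B₂ B₃ : ℝ}
    (hu : ‖u₁ - u₀‖ ≤ B₁) (hv : ‖v₁ - v₀‖ ≤ B₁) (huv : ‖(u₂ - v₂) - (u₁ - v₁)‖ ≤ B₂)
    (h₂ : ‖u₂ - v₂‖ ≤ B₃) : ‖u₀ - v₀‖ ≤ 2 * B₁ + B₂ + B₃ := by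
  calc ‖u₀ - v₀‖ = ‖(u₂ - v₂) - ((u₂ - v₂) - (u₁ - v₁)) - (u₁ - u₀) + (v₁ - v₀)‖ := by
        congr 1; abel
    _ ≤ B₃ + B₂ + B₁ + B₁ :=
        norm_add_le_of_le (norm_sub_le_of_le (norm_sub_le_of_le h₂ huv) hu) hv
    _ = 2 * B₁ + B₂ + B₃ := by ring

lemma integral_radialWeight_mul_norm_sub_le [CompleteSpace F] (h : SolvesDivDivOn b P G s)
    (hP : ContDiff ℝ 2 P) (hG : ∀ i j, ContDiff ℝ 2 (G i j))
    (hL : ∀ i j, (∀ z, ‖radialHessian (b i) (b j) z‖ ≤ L) ∧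
      LipschitzWith L (radialHessian (b i) (b j)))
    (hN : LipschitzWith N (radialWeight : E → ℝ)) (hGα : ∀ i j, HolderBoundOn α M s (G i j))
    (hM : 0 ≤ M) (hPT : ∀ w ∈ s, ‖P w‖ ≤ T) (hT : 0 ≤ T) (hα : α ∈ Ioo 0 1) (hδ : 0 < δ)
    (hxy : dist x y ≤ δ) (hne : x ≠ y) (hs : closedBall x (δ * 2) ⊆ s) :
    (∫ z : E, radialWeight z ∂μ) * ‖P x - P y‖ ≤
      2 * (Fintype.card ι ^ 2 * (L * M * μ.real (closedBall 0 1)) / α * dist x y ^ α) +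
        Fintype.card ι ^ 2 * (L * (M * 2 ^ α) * μ.real (closedBall 0 2)) / (1 - α) *
          dist x y ^ α +
        N * (δ ^ (1 - α) / δ) * μ.real (closedBall 0 2) * T * dist x y ^ α := by
  have hsmall {w : E} (hw : dist w x ≤ δ) :=
    norm_scaledAverage_radialWeight_sub_zero_le (μ := μ) h hP hG (fun i j => (hL i j).1) hGα hM
      hα.1 dist_nonneg ((closedBall_subset_closedBall' (by linarith)).trans hs :
        closedBall w (dist x y) ⊆ s)
  have hvalue : (∫ z : E, radialWeight z ∂μ) * ‖P x - P y‖ =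
      ‖scaledAverage μ radialWeight P x 0 - scaledAverage μ radialWeight P y 0‖ := by
    simp only [scaledAverage_zero, ← smul_sub, norm_smul,
      Real.norm_of_nonneg (integral_radialWeight_pos μ).le]
  rw [hvalue]
  exact norm_sub_le_of_norm_sub_sub_le (hsmall ((dist_self x).trans_le hδ.le))
    (hsmall (by rwa [dist_comm]))
    (norm_scaledAverage_radialWeight_sub_sub_le h hP hG (fun i j => (hL i j).2) hGα hM
      (Ioo_subset_Ico_self hα) hne hxy hs)
    (norm_scaledAverage_radialWeight_sub_le hN hP.continuous hPT hT (Ioo_subset_Icc_self hα) hδ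
      hxy hs)

end ScaleDecomposition

variable [CompleteSpace F] {α δ : ℝ}

lemma exists_norm_sub_le_of_solvesDivDivOn (b : OrthonormalBasis ι ℝ E) (hα : α ∈ Ioo 0 1)
    (hδ : 0 < δ) : ∃ C₁ C₂, 0 ≤ C₁ ∧ 0 ≤ C₂ ∧
      ∀ {P : E → F} {G : ι → ι → E → F} {s : Set E} {M T : ℝ} {x y : E},
        ContDiff ℝ 2 P → (∀ i j, ContDiff ℝ 2 (G i j)) → SolvesDivDivOn b P G s → 0 ≤ M →
        (∀ i j, HolderBoundOn α M s (G i j)) → 0 ≤ T → (∀ w ∈ s, ‖P w‖ ≤ T) →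
        closedBall x (δ * 2) ⊆ s → dist x y ≤ δ →
        ‖P x - P y‖ ≤ (C₁ * M + C₂ * T) * dist x y ^ α := by
  borelize E
  let μ : Measure E := Measure.addHaar
  obtain ⟨L, hL⟩ := exists_radialHessian_norm_le_and_lipschitzWith b
  obtain ⟨N, -, hN⟩ := exists_norm_le_and_lipschitzWith (contDiff_radialWeight (E := E) (n := 1))
    (hasCompactSupport_of_support_subset_closedBall support_radialWeight_subset)
  have hc : 0 < ∫ z : E, radialWeight z ∂μ := integral_radialWeight_pos μ
  set c := ∫ z : E, radialWeight z ∂μ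
  have h1α : 0 < 1 - α := sub_pos.2 hα.2
  have hα₀ : 0 < α := hα.1
  refine ⟨(2 * (Fintype.card ι ^ 2 * (L * μ.real (closedBall 0 1)) / α) +
      Fintype.card ι ^ 2 * (L * 2 ^ α * μ.real (closedBall 0 2)) / (1 - α)) / c,
    N * (δ ^ (1 - α) / δ) * μ.real (closedBall 0 2) / c, by positivity, by positivity, ?_⟩
  intro P G s M T x y hP hG h hM hGα hT hPT hs hxy
  rcases eq_or_ne x y with rfl | hne
  · rw [sub_self, norm_zero]
    positivity
  refine ((le_div_iff₀' hc).2 (integral_radialWeight_mul_norm_sub_le h hP hG hL hN hGα hM hPT hT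
    hα hδ hxy hne hs)).trans_eq ?_
  ring

lemma exists_norm_sub_le_of_solvesDivDivOn_of_contDiffOn (b : OrthonormalBasis ι ℝ E)
    (hα : α ∈ Ioo 0 1) (hδ : 0 < δ) : ∃ C₁ C₂, 0 ≤ C₁ ∧ 0 ≤ C₂ ∧
      ∀ {P : E → F} {G : ι → ι → E → F} {s : Set E} {M T : ℝ} {x y : E}, IsOpen s →
        ContDiffOn ℝ 2 P s → (∀ i j, ContDiffOn ℝ 2 (G i j) s) → SolvesDivDivOn b P G s → 0 ≤ M →
        (∀ i j, HolderBoundOn α M s (G i j)) → 0 ≤ T → (∀ w ∈ s, ‖P w‖ ≤ T) →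
        closedBall x (δ * 4) ⊆ s → dist x y ≤ δ →
        ‖P x - P y‖ ≤ (C₁ * M + C₂ * T) * dist x y ^ α := by
  obtain ⟨C₁, C₂, hC₁, hC₂, hC⟩ :=
    exists_norm_sub_le_of_solvesDivDivOn (F := F) b hα hδ
  refine ⟨C₁, C₂, hC₁, hC₂, ?_⟩
  intro P G s M T x y hs hP hG h hM hGα hT hPT hxs hxy
  have h34 : δ * 3 < δ * 4 := by linarith
  have hextend {f : E → F} (hf : ContDiffOn ℝ 2 f s) :=
    exists_contDiff_eqOn_ball (n := 2) hs (by positivity) h34 hxs hf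
  obtain ⟨P', hP', hPP'⟩ := hextend hP
  choose G' hG' hGG' using fun i j => hextend (hG i j)
  have hball : ball x (δ * 3) ⊆ s :=
    (ball_subset_ball h34.le).trans (ball_subset_closedBall.trans hxs)
  have hmem {w : E} (hw : dist x w ≤ δ) : w ∈ ball x (δ * 3) := by
    rw [mem_ball, dist_comm]
    linarith
  rw [← hPP' (hmem ((dist_self x).trans_le hδ.le)), ← hPP' (hmem hxy)]
  refine hC hP' hG' (SolvesDivDivOn.congr (fun w hw => h w (hball hw)) isOpen_ball hPP' hGG') hM
    (fun i j => ((hGα i j).mono le_rfl hball).congr (hGG' i j)) hT (fun w hw => ?_)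
    (closedBall_subset_ball (by linarith)) hxy
  rw [hPP' hw]
  exact hPT w (hball hw)

end LocalEstimate

section InteriorEstimate

variable {ι E F : Type*} [Fintype ι] [NormedAddCommGroup E] [InnerProductSpace ℝ E]
  [FiniteDimensional ℝ E] [NormedAddCommGroup F] [NormedSpace ℝ F] [CompleteSpace F]

theorem stmt_19_general (b : OrthonormalBasis ι ℝ E) {Ω : Set E} (hΩ : IsOpen Ω) {α : ℝ}
    (hα : α ∈ Ioo 0 1) {χ : E → ℝ} {L : ℝ≥0} (hχ : LipschitzWith L χ) (hχc : HasCompactSupport χ)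
    (hχΩ : tsupport χ ⊆ Ω) :
    ∃ C D : ℝ, 0 < C ∧ 0 < D ∧ ∀ (G : ι → ι → E → F) (P : E → F),
      (∀ i j, ContDiffOn ℝ 2 (G i j) Ω) → (∀ i j, ∃ M, 0 ≤ M ∧ HolderBoundOn α M Ω (G i j)) →
      ContDiffOn ℝ 2 P Ω → Bornology.IsBounded (P '' Ω) → SolvesDivDivOn b P G Ω →
      holderNormOn α Ω (fun y => χ y • P y) ≤
        C * (∑ i, ∑ j, holderSeminormOn α Ω (G i j)) + D * supNormOn Ω P := by
  obtain ⟨B, hB⟩ := hχc.exists_bound_of_continuous hχ.continuous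
  have hB₀ : 0 ≤ B := (norm_nonneg _).trans (hB 0)
  obtain ⟨ε, hε, hεΩ⟩ := hχc.isCompact.exists_cthickening_subset_open hΩ hχΩ
  set δ := ε / 4 with hδε
  have hδ : 0 < δ := by positivity
  obtain ⟨C₁, C₂, hC₁, hC₂, hlocal⟩ :=
    exists_norm_sub_le_of_solvesDivDivOn_of_contDiffOn (F := F) b hα hδ
  set K := B + L * δ ^ (1 - α) + 2 * B * δ ^ (-α)
  refine ⟨B * C₁ + 1, B * C₂ + K + 1, by positivity, by positivity, fun G P hG hGα hP hPb h => ?_⟩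
  set M := ∑ i, ∑ j, holderSeminormOn α Ω (G i j)
  set T := supNormOn Ω P
  have hM : 0 ≤ M :=
    Finset.sum_nonneg fun _ _ => Finset.sum_nonneg fun _ _ => holderSeminormOn_nonneg
  have hT : 0 ≤ T := supNormOn_nonneg
  have hGM (i j : ι) : HolderBoundOn α M Ω (G i j) :=
    (holderBoundOn_holderSeminormOn (hGα i j)).mono (holderSeminormOn_le_sum_sum G i j) Subset.rfl
  have hball {y : E} (hy : y ∈ support χ) : closedBall y (δ * 4) ⊆ Ω := by
    rw [hδε, div_mul_cancel₀ _ four_ne_zero]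
    exact (closedBall_subset_cthickening (subset_tsupport _ hy) ε).trans hεΩ
  calc holderNormOn α Ω (fun y => χ y • P y)
      ≤ B * (C₁ * M + C₂ * T) + K * T :=
        holderNormOn_smul_le_of_local (Ioo_subset_Icc_self hα) hδ hχ hB₀ hB hPb (by positivity)
          fun y hy z _ hyz => hlocal hΩ hP hG h hM hGM hT (fun w hw => norm_le_supNormOn hPb hw)
            (hball hy) hyz
    _ ≤ (B * C₁ + 1) * M + (B * C₂ + K + 1) * T := by linarith

end InteriorEstimate

lemma pd_eq_dirDeriv (i : Fin 2) (f : E2 → ℝ) :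
    pd i f = dirDeriv (EuclideanSpace.basisFun (Fin 2) ℝ i) f :=
  funext fun y => by rw [pd, dirDeriv, EuclideanSpace.basisFun_apply]

theorem stmt_19
    (Ω : Set E2) (hΩo : IsOpen Ω) (hΩb : Bornology.IsBounded Ω)
    (α : ℝ) (hα : α ∈ Ioo (0:ℝ) 1)
    (χ : E2 → ℝ) (hχsm : ContDiff ℝ (⊤ : ℕ∞) χ) (hχc : HasCompactSupport χ)
    (hχsupp : tsupport χ ⊆ Ω) :
    ∃ C D : ℝ, 0 < C ∧ 0 < D ∧
      ∀ (G : Fin 2 → Fin 2 → E2 → ℝ) (P : E2 → ℝ),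
        (∃ U : Set E2, IsOpen U ∧ closure Ω ⊆ U ∧ ∀ i j : Fin 2, ContDiffOn ℝ 2 (G i j) U) →
        (∃ U : Set E2, IsOpen U ∧ closure Ω ⊆ U ∧ ContDiffOn ℝ 2 P U) →
        (∀ y ∈ Ω, -(pd 0 (pd 0 P) y + pd 1 (pd 1 P) y) =
          ∑ i : Fin 2, ∑ j : Fin 2, pd i (pd j (G i j)) y) →
        holderNorm α Ω (fun y => χ y * P y) ≤
          C * (∑ i : Fin 2, ∑ j : Fin 2, holderNorm α Ω (G i j)) + D * ⨆ y ∈ Ω, |P y| := by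
  obtain ⟨L, hL⟩ := hχsm.lipschitzWith_of_hasCompactSupport hχc (by simp)
  obtain ⟨C, D, hC, hD, hCD⟩ := stmt_19_general (F := ℝ) (EuclideanSpace.basisFun (Fin 2) ℝ) hΩo hα
    hL hχc hχsupp
  refine ⟨C, D, hC, hD, ?_⟩
  rintro G P ⟨U, hU, hΩU, hG⟩ ⟨V, -, hΩV, hP⟩ hPDE
  have hsolves : SolvesDivDivOn (EuclideanSpace.basisFun (Fin 2) ℝ) P G Ω := fun y hy => by
    simpa only [Fin.sum_univ_two, pd_eq_dirDeriv] using hPDE y hy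
  refine (hCD G P (fun i j => (hG i j).mono (subset_closure.trans hΩU))
    (fun i j => exists_holderBoundOn_of_contDiffOn (Ioo_subset_Icc_self hα) hΩb hU hΩU
      ((hG i j).of_le one_le_two))
    (hP.mono (subset_closure.trans hΩV))
    (isBounded_image_of_continuousOn_closure hΩb (hP.continuousOn.mono hΩV)) hsolves).trans ?_
  exact add_le_add_left (mul_le_mul_of_nonneg_left (Finset.sum_le_sum fun i _ =>
    Finset.sum_le_sum fun j _ => holderSeminormOn_le_holderNormOn) hC.le) _
end
end
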